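/- arXiv:2008.09278 — 5 statements merged into one kernel-verified Lean document; each statement's English description precedes it below -/
import Mathlib

section
/- Let K be a unital *-subalgebra of M_n(ℂ) with conditional expectation E, and f : (0,∞)→(0,∞) continuously differentiable with f convex. Then for every positive definite ρ, the Bregman relative entropy to K satisfies d^f(ρ‖E(ρ)) = inf over positive definite σ ∈ K of d^f(ρ‖σ). -/
open Matrix
open scoped ComplexOrder

/-- Bregman relative entropy `d^f(ρ‖σ) = tr(f(ρ) - f(σ) - (ρ - σ) f'(σ))`. -/
noncomputable def bregman {n : ℕ} (f f' : ℝ → ℝ) (ρ σ : Matrix (Fin n) (Fin n) ℂ) : ℂ :=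
  Matrix.trace (cfc f ρ - cfc f σ - (ρ - σ) * cfc f' σ)

lemma aux_weights {n : ℕ} {A B : Matrix (Fin n) (Fin n) ℂ} (hA : A.IsHermitian)
    (hB : B.IsHermitian) :
    ∃ w : Fin n → Fin n → ℝ, (∀ i j, 0 ≤ w i j) ∧ (∀ j, ∑ i, w i j = 1) ∧
      ∀ g h : ℝ → ℝ, (cfc g A * cfc h B).trace =
        ((∑ i, ∑ j, w i j * (g (hA.eigenvalues i) * h (hB.eigenvalues j)) : ℝ) : ℂ) := by
  obtain ⟨U, hU⟩ : ∃ U : Matrix (Fin n) (Fin n) ℂ, U = (hA.eigenvectorUnitary).1 := ⟨_, rfl⟩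
  obtain ⟨V, hV⟩ : ∃ V : Matrix (Fin n) (Fin n) ℂ, V = (hB.eigenvectorUnitary).1 := ⟨_, rfl⟩
  have hUU : U * star U = 1 := hU ▸ Unitary.coe_mul_star_self hA.eigenvectorUnitary
  have hVV : star V * V = 1 := hV ▸ Unitary.coe_star_mul_self hB.eigenvectorUnitary
  refine ⟨fun i j => Complex.normSq ((star U * V) i j), fun i j => Complex.normSq_nonneg _, ?_, ?_⟩
  · intro j
    have h1 : star (star U * V) * (star U * V) = 1 := by
      rw [star_mul, star_star, mul_assoc, ← mul_assoc U, hUU, one_mul, hVV]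
    have h2 := congrFun (congrFun h1 j) j
    rw [Matrix.mul_apply, Matrix.one_apply_eq] at h2
    have : ((∑ i, Complex.normSq ((star U * V) i j) : ℝ) : ℂ) = 1 := by
      rw [← h2]
      push_cast
      refine Finset.sum_congr rfl fun i _ => ?_
      rw [Complex.normSq_eq_conj_mul_self]
      rfl
    exact_mod_cast this
  · intro g h
    rw [hA.cfc_eq, hB.cfc_eq, Matrix.IsHermitian.cfc, Matrix.IsHermitian.cfc,
      Unitary.conjStarAlgAut_apply, Unitary.conjStarAlgAut_apply]
    rw [← hU, ← hV]
    set D := diagonal ((RCLike.ofReal : ℝ → ℂ) ∘ g ∘ hA.eigenvalues) with hD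
    set D' := diagonal ((RCLike.ofReal : ℝ → ℂ) ∘ h ∘ hB.eigenvalues) with hD'
    have e : (U * D * star U * (V * D' * star V)).trace
        = (D * (star U * V) * D' * star (star U * V)).trace := by
      rw [star_mul, star_star, mul_assoc, mul_assoc U, Matrix.trace_mul_comm]
      simp only [mul_assoc]
    refine e.trans ?_
    rw [Matrix.trace]
    push_cast
    refine Finset.sum_congr rfl fun i _ => ?_
    rw [Matrix.diag_apply, Matrix.mul_apply]
    refine Finset.sum_congr rfl fun j _ => ?_
    rw [hD', Matrix.mul_diagonal, hD, Matrix.diagonal_mul, Complex.normSq_eq_conj_mul_self,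
      Matrix.star_apply]
    simp only [Function.comp, Complex.coe_algebraMap, RCLike.star_def]
    ring

lemma aux_tangent {f f' : ℝ → ℝ} (hf_conv : ConvexOn ℝ (Set.Ioi 0) f)
    (hf_deriv : ∀ x ∈ Set.Ioi (0 : ℝ), HasDerivAt f (f' x) x) {a b : ℝ} (ha : 0 < a)
    (hb : 0 < b) : 0 ≤ f a - f b - (a - b) * f' b := by
  rcases lt_trichotomy a b with h | h | h
  · have := hf_conv.slope_le_of_hasDerivAt (Set.mem_Ioi.2 ha) (Set.mem_Ioi.2 hb) h (hf_deriv b hb)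
    rw [slope_def_field, div_le_iff₀ (by linarith)] at this
    linarith
  · subst h; simp
  · have := hf_conv.le_slope_of_hasDerivAt (Set.mem_Ioi.2 hb) (Set.mem_Ioi.2 ha) h (hf_deriv b hb)
    rw [slope_def_field, le_div_iff₀ (by linarith)] at this
    linarith

lemma aux_klein {n : ℕ} {f f' : ℝ → ℝ} (hf_conv : ConvexOn ℝ (Set.Ioi 0) f)
    (hf_deriv : ∀ x ∈ Set.Ioi (0 : ℝ), HasDerivAt f (f' x) x)
    {A B : Matrix (Fin n) (Fin n) ℂ} (hA : A.PosDef) (hB : B.PosDef) :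
    0 ≤ (bregman f f' A B).re := by
  have hA' : IsSelfAdjoint A := hA.isHermitian
  have hB' : IsSelfAdjoint B := hB.isHermitian
  obtain ⟨w, hw, -, hw2⟩ := aux_weights hA.isHermitian hB.isHermitian
  have c1A : cfc (fun _ => 1 : ℝ → ℝ) A = 1 := cfc_const_one ℝ A
  have c1B : cfc (fun _ => 1 : ℝ → ℝ) B = 1 := cfc_const_one ℝ B
  have e1 := hw2 f (fun _ => 1)
  have e2 := hw2 (fun _ => 1) f
  have e3 := hw2 id f'
  have e4 := hw2 (fun _ => 1) (fun x => id x * f' x)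
  have hfin : ∀ g : ℝ → ℝ, ContinuousOn g (spectrum ℝ B) := fun g =>
    (Matrix.finite_real_spectrum (A := B)).continuousOn g
  rw [cfc_mul id f' B (hfin _) (hfin _)] at e4
  rw [c1B, mul_one] at e1
  rw [c1A, one_mul] at e2
  rw [cfc_id ℝ A] at e3
  rw [c1A, cfc_id ℝ B, one_mul] at e4
  rw [bregman, sub_mul, Matrix.trace_sub, Matrix.trace_sub, Matrix.trace_sub, e1, e2, e3, e4]
  simp only [← Complex.ofReal_sub, Complex.ofReal_re, ← Finset.sum_sub_distrib]
  refine Finset.sum_nonneg fun i _ => Finset.sum_nonneg fun j _ => ?_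
  have := mul_nonneg (hw i j) (aux_tangent hf_conv hf_deriv (hA.eigenvalues_pos i)
    (hB.eigenvalues_pos j))
  simp only [id]
  linarith

lemma aux_mem {n : ℕ} (K : StarSubalgebra ℂ (Matrix (Fin n) (Fin n) ℂ)) (g : ℝ → ℝ)
    {a : Matrix (Fin n) (Fin n) ℂ} (ha : a ∈ K) : cfc g a ∈ K := by
  have : IsClosed (K : Set (Matrix (Fin n) (Fin n) ℂ)) :=
    K.toSubalgebra.toSubmodule.closed_of_finiteDimensional
  exact cfc_mem (𝕜' := ℂ) g ha

lemma aux_posDef {n : ℕ} (K : StarSubalgebra ℂ (Matrix (Fin n) (Fin n) ℂ))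
    {ρ τ : Matrix (Fin n) (Fin n) ℂ} (hρ : ρ.PosDef) (hτ : τ ∈ K)
    (h : ∀ k ∈ K, (ρ * k).trace = (τ * k).trace) : τ.PosDef := by
  have hH : τ.IsHermitian := by
    have hd : τ - star τ ∈ K := sub_mem hτ (star_mem hτ)
    have hs : ∀ k ∈ K, (star τ * k).trace = (τ * k).trace := by
      intro k hk
      have h1 := h (star k) (star_mem hk)
      have h2 := congrArg star h1
      rw [← Matrix.trace_conjTranspose, ← Matrix.trace_conjTranspose,
        Matrix.conjTranspose_mul, Matrix.conjTranspose_mul, hρ.isHermitian.eq,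
        ← star_eq_conjTranspose, star_star, Matrix.trace_mul_comm, h k hk,
        Matrix.trace_mul_comm k] at h2
      exact h2.symm
    have h0 : ((τ - star τ) * (τ - star τ)ᴴ).trace = 0 := by
      have := hs _ (star_mem hd)
      rw [sub_mul, Matrix.trace_sub, ← star_eq_conjTranspose, this, sub_self]
    rw [Matrix.trace_mul_conjTranspose_self_eq_zero_iff] at h0
    exact (sub_eq_zero.1 h0).symm
  have hA' : IsSelfAdjoint ρ := hρ.isHermitian
  have hB' : IsSelfAdjoint τ := hH
  rw [hH.posDef_iff_eigenvalues_pos]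
  intro k
  by_contra hk
  push Not at hk
  set l := hH.eigenvalues k with hl
  obtain ⟨w, hw, hw1, hw2⟩ := aux_weights hρ.isHermitian hH
  have c1A : cfc (fun _ => 1 : ℝ → ℝ) ρ = 1 := cfc_const_one ℝ ρ
  have hfin : ∀ g : ℝ → ℝ, ContinuousOn g (spectrum ℝ τ) := fun g =>
    (Matrix.finite_real_spectrum (A := τ)).continuousOn g
  let g : ℝ → ℝ := fun x => if x = l then 1 else 0
  have e3 := hw2 id g
  have e4 := hw2 (fun _ => 1) (fun x => id x * g x)
  rw [cfc_mul id g τ (hfin _) (hfin _), c1A, cfc_id ℝ τ, one_mul] at e4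
  rw [cfc_id ℝ ρ, h _ (aux_mem K g hτ), e4] at e3
  have e5 := Complex.ofReal_injective e3
  have e6 : ∑ i, ∑ j, w i j * ((hρ.isHermitian.eigenvalues i - hH.eigenvalues j) *
      g (hH.eigenvalues j)) = 0 := by
    rw [← sub_eq_zero.2 e5.symm]
    simp only [← Finset.sum_sub_distrib, id]
    refine Finset.sum_congr rfl fun i _ => Finset.sum_congr rfl fun j _ => by ring
  have hnn : ∀ i j, 0 ≤ w i j * ((hρ.isHermitian.eigenvalues i - hH.eigenvalues j) *
      g (hH.eigenvalues j)) := by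
    intro i j
    refine mul_nonneg (hw i j) ?_
    by_cases hj : hH.eigenvalues j = l
    · have := hρ.eigenvalues_pos i
      simp only [g, hj, if_true]
      linarith
    · simp [g, hj]
  have hz : ∀ i, w i k = 0 := by
    intro i
    have h1 := (Finset.sum_eq_zero_iff_of_nonneg
      (fun i _ => Finset.sum_nonneg fun j _ => hnn i j)).1 e6 i (Finset.mem_univ _)
    have h2 := (Finset.sum_eq_zero_iff_of_nonneg (fun j _ => hnn i j)).1 h1 k (Finset.mem_univ _)
    have := hρ.eigenvalues_pos i
    rcases mul_eq_zero.1 h2 with h3 | h3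
    · exact h3
    · simp only [g, ← hl, if_true] at h3
      linarith
  have := hw1 k
  simp [hz] at this

/-- for the conditional expectation `E` onto a unital *-subalgebra `K` and a convex
C¹ function `f : (0,∞) → (0,∞)`, the Bregman relative entropy to `K` satisfies
`d^f(ρ‖E(ρ)) = inf { d^f(ρ‖σ) | σ ∈ K positive definite }`. -/
theorem bregman_inf_over_subalgebra {n : ℕ}
    (K : StarSubalgebra ℂ (Matrix (Fin n) (Fin n) ℂ))
    (E : Matrix (Fin n) (Fin n) ℂ →ₗ[ℂ] Matrix (Fin n) (Fin n) ℂ)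
    (hEmem : ∀ x, E x ∈ K)
    (hEfix : ∀ x ∈ K, E x = x)
    (hEtr : ∀ x, (E x).trace = x.trace)
    (hEadj : ∀ x y, (x * E y).trace = (E x * y).trace)
    (hEmod : ∀ a ∈ K, ∀ b ∈ K, ∀ x, E (a * x * b) = a * E x * b)
    (f f' : ℝ → ℝ)
    (hf_pos : ∀ x ∈ Set.Ioi (0 : ℝ), 0 < f x)
    (hf_conv : ConvexOn ℝ (Set.Ioi 0) f)
    (hf_deriv : ∀ x ∈ Set.Ioi (0 : ℝ), HasDerivAt f (f' x) x)
    (hf'_cont : ContinuousOn f' (Set.Ioi 0))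
    (ρ : Matrix (Fin n) (Fin n) ℂ) (hρ : ρ.PosDef) :
    (bregman f f' ρ (E ρ)).re =
      sInf {x : ℝ | ∃ σ : Matrix (Fin n) (Fin n) ℂ,
        σ.PosDef ∧ σ ∈ K ∧ x = (bregman f f' ρ σ).re} := by
  have hadj : ∀ k ∈ K, (ρ * k).trace = (E ρ * k).trace := by
    intro k hk
    rw [← hEadj, hEfix k hk]
  have hpd : (E ρ).PosDef := aux_posDef K hρ (hEmem ρ) hadj
  symm
  apply IsLeast.csInf_eq
  refine ⟨⟨E ρ, hpd, hEmem ρ, rfl⟩, ?_⟩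
  rintro x ⟨σ, hσ, hσK, rfl⟩
  have key : bregman f f' ρ σ = bregman f f' ρ (E ρ) + bregman f f' (E ρ) σ := by
    have h1 := hadj _ (aux_mem K f' hσK)
    have h2 := hadj _ (aux_mem K f' (hEmem ρ))
    simp only [bregman, sub_mul, Matrix.trace_sub]
    rw [h1, h2]
    ring
  have := aux_klein hf_conv hf_deriv hpd hσ
  rw [key, Complex.add_re]
  linarith
end

section
/- Let p ∈ (1,2). The function F(ρ,σ) = tr[(ρ − σ)(ρ^{p−1} − σ^{p−1})] is jointly convex on pairs of positive definite n×n matrices: for ρ₁,ρ₂,σ₁,σ₂ positive definite and λ ∈ [0,1], F(λρ₁+(1−λ)ρ₂, λσ₁+(1−λ)σ₂) ≤ λF(ρ₁,σ₁) + (1−λ)F(ρ₂,σ₂). -/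
open Matrix
open scoped ComplexOrder

/-- Matrix power `A^q` (real exponent) via the continuous functional calculus. -/
noncomputable def mpow {n : ℕ} (A : Matrix (Fin n) (Fin n) ℂ) (q : ℝ) :
    Matrix (Fin n) (Fin n) ℂ :=
  cfc (fun x : ℝ => x ^ q) A

/-- `F(ρ,σ) = tr[(ρ − σ)(ρ^{p−1} − σ^{p−1})]` (real part of the trace). -/
noncomputable def Fp {n : ℕ} (p : ℝ) (ρ σ : Matrix (Fin n) (Fin n) ℂ) : ℝ :=
  (Matrix.trace ((ρ - σ) * (mpow ρ (p - 1) - mpow σ (p - 1)))).re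

section Helpers

open MeasureTheory Set

/-- Diagonalisation data of a positive definite matrix. -/
structure Dg (n : ℕ) where
  U : Matrix (Fin n) (Fin n) ℂ
  a : Fin n → ℝ
  h1 : U * Uᴴ = 1
  h2 : Uᴴ * U = 1
  pos : ∀ i, 0 < a i

/-- `f` applied to the matrix described by `D`. -/
noncomputable def Dg.app {n : ℕ} (D : Dg n) (f : ℝ → ℝ) : Matrix (Fin n) (Fin n) ℂ :=
  D.U * diagonal (fun i => ((f (D.a i) : ℝ) : ℂ)) * D.Uᴴ

/-- The matrix described by `D`. -/
noncomputable def Dg.mat {n : ℕ} (D : Dg n) : Matrix (Fin n) (Fin n) ℂ := D.app id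

lemma exists_Dg {n : ℕ} {ρ : Matrix (Fin n) (Fin n) ℂ} (h : ρ.PosDef) :
    ∃ D : Dg n, D.mat = ρ ∧ ∀ q, D.app (fun x => x ^ q) = mpow ρ q := by
  have hH := h.1
  refine ⟨⟨hH.eigenvectorUnitary, hH.eigenvalues, ?_, ?_, h.eigenvalues_pos⟩, ?_, ?_⟩
  · exact Unitary.coe_mul_star_self hH.eigenvectorUnitary
  · exact Unitary.coe_star_mul_self hH.eigenvectorUnitary
  · conv_rhs => rw [hH.spectral_theorem, Unitary.conjStarAlgAut_apply]
    rfl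
  · intro q
    rw [mpow, hH.cfc_eq, Matrix.IsHermitian.cfc, Unitary.conjStarAlgAut_apply]
    rfl

/-- Coordinates of `P` in the bases of `D` and `E`. -/
noncomputable def crd {n : ℕ} (D E : Dg n) (P : Matrix (Fin n) (Fin n) ℂ) :
    Matrix (Fin n) (Fin n) ℂ := D.Uᴴ * P * E.U

lemma trace_crd {n : ℕ} (D E : Dg n) (P Q : Matrix (Fin n) (Fin n) ℂ) :
    (trace (P * Qᴴ)).re = ∑ i, ∑ j, (crd D E P i j * star (crd D E Q i j)).re := by
  have : trace (P * Qᴴ) = trace (crd D E P * (crd D E Q)ᴴ) := by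
    have e : crd D E P * (crd D E Q)ᴴ = D.Uᴴ * (P * Qᴴ * D.U) := by
      calc _ = D.Uᴴ * P * (E.U * E.Uᴴ) * Qᴴ * D.U := by
            simp [crd, Matrix.mul_assoc]
        _ = _ := by rw [E.h1]; simp [Matrix.mul_assoc]
    rw [e, trace_mul_comm D.Uᴴ, Matrix.mul_assoc (P * Qᴴ), D.h1, Matrix.mul_one]
  rw [this]
  simp [trace, Matrix.mul_apply, -Complex.mul_re]

lemma crd_app_left {n : ℕ} (D E : Dg n) (f : ℝ → ℝ) (P : Matrix (Fin n) (Fin n) ℂ) (i j) :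
    crd D E (D.app f * P) i j = (f (D.a i) : ℂ) * crd D E P i j := by
  have : crd D E (D.app f * P) = diagonal (fun i => ((f (D.a i) : ℝ) : ℂ)) * crd D E P := by
    calc _ = (D.Uᴴ * D.U) * diagonal (fun i => ((f (D.a i) : ℝ) : ℂ)) * D.Uᴴ * P * E.U := by
          simp [crd, Dg.app, Matrix.mul_assoc]
      _ = _ := by rw [D.h2]; simp [crd, Matrix.mul_assoc]
  rw [this, diagonal_mul]

lemma crd_app_right {n : ℕ} (D E : Dg n) (f : ℝ → ℝ) (P : Matrix (Fin n) (Fin n) ℂ) (i j) :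
    crd D E (P * E.app f) i j = (f (E.a j) : ℂ) * crd D E P i j := by
  have : crd D E (P * E.app f) = crd D E P * diagonal (fun i => ((f (E.a i) : ℝ) : ℂ)) := by
    calc _ = D.Uᴴ * P * E.U * diagonal (fun i => ((f (E.a i) : ℝ) : ℂ)) * (E.Uᴴ * E.U) := by
          simp [crd, Dg.app, Matrix.mul_assoc]
      _ = _ := by rw [E.h2]; simp [crd]
  rw [this, mul_diagonal, mul_comm]

lemma crd_add {n : ℕ} (D E : Dg n) (P Q : Matrix (Fin n) (Fin n) ℂ) :
    crd D E (P + Q) = crd D E P + crd D E Q := by simp [crd, Matrix.mul_add, Matrix.add_mul]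

lemma crd_sub {n : ℕ} (D E : Dg n) (P Q : Matrix (Fin n) (Fin n) ℂ) :
    crd D E (P - Q) = crd D E P - crd D E Q := by simp [crd, Matrix.mul_sub, Matrix.sub_mul]

lemma crd_smul {n : ℕ} (D E : Dg n) (c : ℂ) (P : Matrix (Fin n) (Fin n) ℂ) :
    crd D E (c • P) = c • crd D E P := by simp [crd]

lemma crd_app_sub {n : ℕ} (D E : Dg n) (f : ℝ → ℝ) (i j) :
    crd D E (D.app f - E.app f) i j =
      ((f (D.a i) - f (E.a j) : ℝ) : ℂ) * crd D E 1 i j := by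
  have h1 := crd_app_left D E f 1 i j
  have h2 := crd_app_right D E f 1 i j
  rw [Matrix.mul_one] at h1
  rw [Matrix.one_mul] at h2
  rw [crd_sub, Matrix.sub_apply, h1, h2]
  push_cast; ring

/-- Weighted kernel sum. -/
noncomputable def KS {n : ℕ} (k : ℝ → ℝ → ℝ) (D E : Dg n) : ℝ :=
  ∑ i, ∑ j, Complex.normSq (crd D E 1 i j) * k (D.a i) (E.a j)

lemma app_herm {n : ℕ} (D : Dg n) (f : ℝ → ℝ) : (D.app f)ᴴ = D.app f := by
  simp [Dg.app, Matrix.mul_assoc, diagonal_conjTranspose, Pi.star_def]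

lemma Fp_eq {n : ℕ} (p : ℝ) (D E : Dg n)
    {ρ σ : Matrix (Fin n) (Fin n) ℂ} (hρ : D.mat = ρ) (hσ : E.mat = σ)
    (hρ' : ∀ q, D.app (fun x => x ^ q) = mpow ρ q) (hσ' : ∀ q, E.app (fun x => x ^ q) = mpow σ q) :
    Fp p ρ σ = KS (fun a b => (a - b) * (a ^ (p - 1) - b ^ (p - 1))) D E := by
  have : mpow ρ (p - 1) - mpow σ (p - 1) = (mpow ρ (p - 1) - mpow σ (p - 1))ᴴ := by
    rw [← hρ', ← hσ', conjTranspose_sub, app_herm, app_herm]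
  rw [Fp, this, trace_crd D E, KS]
  refine Finset.sum_congr rfl fun i _ => Finset.sum_congr rfl fun j _ => ?_
  rw [← hρ', ← hσ', crd_app_sub, ← hρ, ← hσ, Dg.mat, Dg.mat, crd_app_sub]
  simp [Complex.normSq_apply]
  ring

/-- Joint convexity for a kernel. -/
def Good (n : ℕ) (k : ℝ → ℝ → ℝ) : Prop :=
  ∀ (l : ℝ), l ∈ Icc (0 : ℝ) 1 → ∀ D D1 D2 E E1 E2 : Dg n,
    D.mat = (l : ℂ) • D1.mat + ((1 - l : ℝ) : ℂ) • D2.mat →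
    E.mat = (l : ℂ) • E1.mat + ((1 - l : ℝ) : ℂ) • E2.mat →
    KS k D E ≤ l * KS k D1 E1 + (1 - l) * KS k D2 E2

lemma KS_congr {n : ℕ} {k k' : ℝ → ℝ → ℝ} (h : ∀ a b, 0 < a → 0 < b → k a b = k' a b)
    (D E : Dg n) : KS k D E = KS k' D E := by
  refine Finset.sum_congr rfl fun i _ => Finset.sum_congr rfl fun j _ => ?_
  rw [h _ _ (D.pos i) (E.pos j)]

lemma Good.congr {n : ℕ} {k k' : ℝ → ℝ → ℝ} (h : ∀ a b, 0 < a → 0 < b → k a b = k' a b)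
    (hk : Good n k) : Good n k' := by
  intro l hl D D1 D2 E E1 E2 h1 h2
  simpa only [KS_congr h] using hk l hl D D1 D2 E E1 E2 h1 h2

lemma KS_smul {n : ℕ} (k : ℝ → ℝ → ℝ) (c : ℝ) (D E : Dg n) :
    KS (fun a b => c * k a b) D E = c * KS k D E := by
  simp only [KS, Finset.mul_sum]
  refine Finset.sum_congr rfl fun i _ => Finset.sum_congr rfl fun j _ => ?_
  ring

lemma Good.smul {n : ℕ} {k : ℝ → ℝ → ℝ} (hk : Good n k) {c : ℝ} (hc : 0 ≤ c) :
    Good n (fun a b => c * k a b) := by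
  intro l hl D D1 D2 E E1 E2 h1 h2
  have := mul_le_mul_of_nonneg_left (hk l hl D D1 D2 E E1 E2 h1 h2) hc
  simp only [KS_smul]
  linarith

lemma KS_integral {n : ℕ} {K : ℝ → ℝ → ℝ → ℝ} {S : Set ℝ}
    (hi : ∀ a b, 0 < a → 0 < b → IntegrableOn (fun t => K t a b) S) (D E : Dg n) :
    IntegrableOn (fun t => KS (K t) D E) S ∧
    KS (fun a b => ∫ t in S, K t a b) D E = ∫ t in S, KS (K t) D E := by
  have h0 : ∀ i j, IntegrableOn
      (fun t => Complex.normSq (crd D E 1 i j) * K t (D.a i) (E.a j)) S := fun i j =>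
    (hi _ _ (D.pos i) (E.pos j)).const_mul _
  constructor
  · exact integrable_finsetSum _ fun i _ => integrable_finsetSum _ fun j _ => h0 i j
  · simp only [KS]
    rw [integral_finsetSum _ fun i _ => integrable_finsetSum _ fun j _ => h0 i j]
    refine Finset.sum_congr rfl fun i _ => ?_
    rw [integral_finsetSum _ fun j _ => h0 i j]
    refine Finset.sum_congr rfl fun j _ => ?_
    rw [integral_const_mul]

lemma Good.integral {n : ℕ} {K : ℝ → ℝ → ℝ → ℝ} {S : Set ℝ} (hS : MeasurableSet S)
    (hi : ∀ a b, 0 < a → 0 < b → IntegrableOn (fun t => K t a b) S)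
    (hk : ∀ t ∈ S, Good n (K t)) : Good n (fun a b => ∫ t in S, K t a b) := by
  intro l hl D D1 D2 E E1 E2 h1 h2
  obtain ⟨i0, e0⟩ := KS_integral hi D E
  obtain ⟨i1, e1⟩ := KS_integral hi D1 E1
  obtain ⟨i2, e2⟩ := KS_integral hi D2 E2
  rw [e0, e1, e2, ← integral_const_mul, ← integral_const_mul,
    ← integral_add (i1.const_mul _) (i2.const_mul _)]
  exact setIntegral_mono_on i0 ((i1.const_mul _).add (i2.const_mul _)) hS
    fun t ht => hk t ht l hl D D1 D2 E E1 E2 h1 h2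

/-- The variational functional. -/
noncomputable def Var {n : ℕ} (u v t : ℝ) (Y ρ σ : Matrix (Fin n) (Fin n) ℂ) : ℝ :=
  2 * (trace ((ρ - σ) * Yᴴ)).re -
    (u * (trace ((ρ * Y) * Yᴴ)).re + v * (trace ((Y * σ) * Yᴴ)).re + t * (trace (Y * Yᴴ)).re)

lemma Var_affine {n : ℕ} (u v t l : ℝ) (Y ρ1 ρ2 σ1 σ2 : Matrix (Fin n) (Fin n) ℂ) :
    Var u v t Y ((l : ℂ) • ρ1 + ((1 - l : ℝ) : ℂ) • ρ2) ((l : ℂ) • σ1 + ((1 - l : ℝ) : ℂ) • σ2) =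
      l * Var u v t Y ρ1 σ1 + (1 - l) * Var u v t Y ρ2 σ2 := by
  simp only [Var, Matrix.sub_mul, Matrix.add_mul, Matrix.mul_add, Matrix.smul_mul,
    Matrix.mul_smul, trace_add, trace_sub, trace_smul, Complex.add_re, Complex.sub_re,
    smul_eq_mul, Complex.re_ofReal_mul]
  ring

lemma Var_eq {n : ℕ} (u v t : ℝ) (Y : Matrix (Fin n) (Fin n) ℂ) (D E : Dg n) :
    Var u v t Y D.mat E.mat = ∑ i, ∑ j,
      (2 * ((D.a i - E.a j) * (crd D E 1 i j * star (crd D E Y i j)).re) -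
        (u * D.a i + v * E.a j + t) * Complex.normSq (crd D E Y i j)) := by
  rw [Var, trace_crd D E, trace_crd D E, trace_crd D E, trace_crd D E]
  simp only [Finset.mul_sum, ← Finset.sum_add_distrib, ← Finset.sum_sub_distrib]
  refine Finset.sum_congr rfl fun i _ => Finset.sum_congr rfl fun j _ => ?_
  rw [Dg.mat, Dg.mat, crd_app_sub, crd_app_left, crd_app_right]
  simp [Complex.normSq_apply]
  ring

lemma scal_le (w z : ℂ) (d m : ℝ) (hm : 0 < m) :
    2 * (d * (w * star z).re) - m * Complex.normSq z ≤ Complex.normSq w * (d ^ 2 / m) := by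
  have : Complex.normSq w * (d ^ 2 / m) - (2 * (d * (w * star z).re) - m * Complex.normSq z)
      = ((d * w.re - m * z.re) ^ 2 + (d * w.im - m * z.im) ^ 2) / m := by
    simp [Complex.normSq_apply]
    field_simp
    ring
  have h2 : 0 ≤ ((d * w.re - m * z.re) ^ 2 + (d * w.im - m * z.im) ^ 2) / m := by positivity
  linarith

lemma Good_base (n : ℕ) {u v t : ℝ} (hu : 0 ≤ u) (hv : 0 ≤ v) (ht : 0 < t) :
    Good n (fun a b => (a - b) ^ 2 / (u * a + v * b + t)) := by
  have hle : ∀ (D E : Dg n) Y, Var u v t Y D.mat E.mat ≤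
      KS (fun a b => (a - b) ^ 2 / (u * a + v * b + t)) D E := by
    intro D E Y
    rw [Var_eq, KS]
    refine Finset.sum_le_sum fun i _ => Finset.sum_le_sum fun j _ => ?_
    have := D.pos i
    have := E.pos j
    exact scal_le _ _ _ _ (by positivity)
  intro l hl D D1 D2 E E1 E2 h1 h2
  let Z : Matrix (Fin n) (Fin n) ℂ := fun i j =>
    (((D.a i - E.a j) / (u * D.a i + v * E.a j + t) : ℝ) : ℂ) * crd D E 1 i j
  have hZ : crd D E (D.U * Z * E.Uᴴ) = Z := by
    calc _ = (D.Uᴴ * D.U) * Z * (E.Uᴴ * E.U) := by simp [crd, Matrix.mul_assoc]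
      _ = Z := by rw [D.h2, E.h2]; simp
  have heq : KS (fun a b => (a - b) ^ 2 / (u * a + v * b + t)) D E =
      Var u v t (D.U * Z * E.Uᴴ) D.mat E.mat := by
    rw [Var_eq, KS, hZ]
    refine Finset.sum_congr rfl fun i _ => Finset.sum_congr rfl fun j _ => ?_
    have := D.pos i
    have := E.pos j
    have hm : 0 < u * D.a i + v * E.a j + t := by positivity
    simp only [Z]
    generalize u * D.a i + v * E.a j + t = m at *
    generalize D.a i - E.a j = d at *
    simp [Complex.normSq_apply, -Complex.ofReal_div]
    field_simp
    ring
  rw [heq, h1, h2, Var_affine]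
  have := mul_le_mul_of_nonneg_left (hle D1 E1 (D.U * Z * E.Uᴴ)) hl.1
  have := mul_le_mul_of_nonneg_left (hle D2 E2 (D.U * Z * E.Uᴴ)) (sub_nonneg.2 hl.2)
  linarith

lemma Good_pow (n : ℕ) {u s : ℝ} (hu : u ∈ Ioc (0 : ℝ) 1) (hs : s ∈ Ioo (0 : ℝ) 1) :
    Good n (fun a b => (a - b) ^ 2 * (u * a + (1 - u) * b) ^ (s - 1)) := by
  have hy : ∀ a b : ℝ, 0 < a → 0 < b → 0 < u * a + (1 - u) * b := by
    intro a b ha hb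
    have := mul_pos hu.1 ha
    have := mul_nonneg (sub_nonneg.2 hu.2) hb.le
    linarith
  have hK : ∀ a b : ℝ, 0 < a → 0 < b → ∀ t ∈ Ioi (0 : ℝ),
      (a - b) ^ 2 / (u * a + (1 - u) * b) * Real.rpowIntegrand₀₁ s t (u * a + (1 - u) * b) =
      t ^ (s - 1) * ((a - b) ^ 2 / (u * a + (1 - u) * b + t)) := by
    intro a b ha hb t ht
    have h0 := hy a b ha hb
    have ht' : 0 < t := ht
    rw [Real.rpowIntegrand₀₁_eq_pow_div hs ht'.le h0.le]
    generalize u * a + (1 - u) * b = y at *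
    field_simp
    ring
  have hc := Real.integral_rpowIntegrand₀₁_one_pos hs
  have G : Good n (fun a b => ∫ t in Ioi (0 : ℝ),
      t ^ (s - 1) * ((a - b) ^ 2 / (u * a + (1 - u) * b + t))) := by
    refine Good.integral measurableSet_Ioi ?_ ?_
    · intro a b ha hb
      refine IntegrableOn.congr_fun ?_ (hK a b ha hb) measurableSet_Ioi
      exact (Real.integrableOn_rpowIntegrand₀₁_Ioi hs (hy a b ha hb).le).const_mul _
    · intro t ht
      exact (Good_base n hu.1.le (sub_nonneg.2 hu.2) ht).smul (Real.rpow_nonneg (le_of_lt ht) _)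
  refine (G.smul (inv_nonneg.2 hc.le)).congr ?_
  intro a b ha hb
  have h0 := hy a b ha hb
  rw [← setIntegral_congr_fun measurableSet_Ioi (hK a b ha hb), integral_const_mul,
    Real.integral_rpowIntegrand₀₁_eq_rpow_mul_const hs h0.le, Real.rpow_sub_one h0.ne']
  field_simp

lemma Good_final (n : ℕ) {s : ℝ} (hs : s ∈ Ioo (0 : ℝ) 1) :
    Good n (fun a b => (a - b) * (a ^ s - b ^ s)) := by
  have hy : ∀ a b u : ℝ, 0 < a → 0 < b → u ∈ Icc (0 : ℝ) 1 → 0 < u * a + (1 - u) * b := by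
    intro a b u ha hb hu
    have h1 := mul_nonneg hu.1 ha.le
    have h2 := mul_nonneg (sub_nonneg.2 hu.2) hb.le
    rcases hu.1.eq_or_lt with h | h
    · rw [← h]; simpa using hb
    · have := mul_pos h ha
      linarith
  have hcont : ∀ a b : ℝ, 0 < a → 0 < b → ContinuousOn
      (fun u : ℝ => (a - b) ^ 2 * (u * a + (1 - u) * b) ^ (s - 1)) (Icc 0 1) := by
    intro a b ha hb
    refine continuousOn_const.mul (ContinuousOn.rpow_const (by fun_prop) ?_)
    intro u hu
    exact Or.inl (hy a b u ha hb hu).ne'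
  have G : Good n (fun a b => ∫ u in Ioc (0 : ℝ) 1,
      (a - b) ^ 2 * (u * a + (1 - u) * b) ^ (s - 1)) := by
    refine Good.integral measurableSet_Ioc ?_ fun u hu => Good_pow n hu hs
    intro a b ha hb
    exact ((hcont a b ha hb).integrableOn_Icc).mono_set Ioc_subset_Icc_self
  refine (G.smul hs.1.le).congr ?_
  intro a b ha hb
  rw [← intervalIntegral.integral_of_le zero_le_one, ← intervalIntegral.integral_const_mul]
  have := intervalIntegral.integral_eq_sub_of_hasDerivAt (a := (0 : ℝ)) (b := 1)
    (f := fun u => (a - b) * (u * a + (1 - u) * b) ^ s)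
    (f' := fun u => s * ((a - b) ^ 2 * (u * a + (1 - u) * b) ^ (s - 1))) ?_ ?_
  · rw [this]; simp; ring
  · intro u hu
    rw [uIcc_of_le zero_le_one] at hu
    have h1 : HasDerivAt (fun u : ℝ => u * a + (1 - u) * b) (1 * a + (0 - 1) * b) u :=
      ((hasDerivAt_id u).mul_const a).add
        (((hasDerivAt_const u (1 : ℝ)).sub (hasDerivAt_id u)).mul_const b)
    have h2 := (h1.rpow_const (p := s) (Or.inl (hy a b u ha hb hu).ne')).const_mul (a - b)
    refine h2.congr_deriv ?_
    ring
  · refine ContinuousOn.intervalIntegrable ?_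
    rw [uIcc_of_le zero_le_one]
    exact continuousOn_const.mul (hcont a b ha hb)

lemma posDef_mix {n : ℕ} {A B : Matrix (Fin n) (Fin n) ℂ} (hA : A.PosDef) (hB : B.PosDef)
    {l : ℝ} (hl : l ∈ Icc (0 : ℝ) 1) :
    ((l : ℂ) • A + ((1 - l : ℝ) : ℂ) • B).PosDef := by
  rcases hl.1.eq_or_lt with h | h
  · rw [← h]; simpa using hB
  · refine PosDef.add_posSemidef (hA.smul ?_) (hB.posSemidef.smul ?_)
    · exact_mod_cast h
    · exact_mod_cast sub_nonneg.2 hl.2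

end Helpers

/-- for `p ∈ (1,2)`, `F(ρ,σ) = tr[(ρ−σ)(ρ^{p−1}−σ^{p−1})]` is jointly convex on
pairs of positive definite matrices. -/
theorem Fp_jointly_convex {n : ℕ} (p : ℝ) (hp : p ∈ Set.Ioo (1 : ℝ) 2)
    (ρ₁ ρ₂ σ₁ σ₂ : Matrix (Fin n) (Fin n) ℂ)
    (hρ₁ : ρ₁.PosDef) (hρ₂ : ρ₂.PosDef) (hσ₁ : σ₁.PosDef) (hσ₂ : σ₂.PosDef)
    (lam : ℝ) (hlam : lam ∈ Set.Icc (0 : ℝ) 1) :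
    Fp p ((lam : ℂ) • ρ₁ + ((1 - lam : ℝ) : ℂ) • ρ₂)
        ((lam : ℂ) • σ₁ + ((1 - lam : ℝ) : ℂ) • σ₂) ≤
      lam * Fp p ρ₁ σ₁ + (1 - lam) * Fp p ρ₂ σ₂ := by
  obtain ⟨D1, a1, b1⟩ := exists_Dg hρ₁
  obtain ⟨D2, a2, b2⟩ := exists_Dg hρ₂
  obtain ⟨E1, c1, d1⟩ := exists_Dg hσ₁
  obtain ⟨E2, c2, d2⟩ := exists_Dg hσ₂
  obtain ⟨D, a, b⟩ := exists_Dg (posDef_mix hρ₁ hρ₂ hlam)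
  obtain ⟨E, c, d⟩ := exists_Dg (posDef_mix hσ₁ hσ₂ hlam)
  rw [Fp_eq p D E a c b d, Fp_eq p D1 E1 a1 c1 b1 d1, Fp_eq p D2 E2 a2 c2 b2 d2]
  refine Good_final n (s := p - 1) ⟨by linarith [hp.1], by linarith [hp.2]⟩ lam hlam
    D D1 D2 E E1 E2 ?_ ?_
  · rw [a, a1, a2]
  · rw [c, c1, c2]
end

section
/- Let f : (0,∞) → ℝ be C¹ and ρ, σ positive definite n×n matrices with spectral decompositions ρ = ∑ᵢ sᵢ pᵢ and σ = ∑ⱼ tⱼ qⱼ. Then tr(f'(a(t))(ρ−σ))' at direction ρ−σ is given by the Schur multiplier: for a(t)=(1−t)σ+tρ, d²/dt² tr(f(a(t))) = ∑_{i,j} f^{[2]}(λᵢ(t), λⱼ(t)) tr(Pᵢ(t)(ρ−σ)Pⱼ(t)(ρ−σ)), where λᵢ(t), Pᵢ(t) are eigenvalues and spectral projections of a(t) and f^{[2]}(x,y) = (f'(x)−f'(y))/(x−y) for x≠y, f^{[2]}(x,x) = f''(x). -/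
open Matrix
open scoped ComplexOrder

/-- The spectral projection of a Hermitian matrix onto the `i`-th eigenvector. -/
noncomputable def specProj {n : ℕ} {A : Matrix (Fin n) (Fin n) ℂ} (hA : A.IsHermitian)
    (i : Fin n) : Matrix (Fin n) (Fin n) ℂ :=
  (hA.eigenvectorUnitary : Matrix (Fin n) (Fin n) ℂ) *
    Matrix.diagonal (fun k => if k = i then (1 : ℂ) else 0) *
    star (hA.eigenvectorUnitary : Matrix (Fin n) (Fin n) ℂ)

/-- The first divided difference `f^{[2]}` of `f'` : `(f'(x)−f'(y))/(x−y)` for `x ≠ y`,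
and `f''(x)` on the diagonal. -/
noncomputable def divDiff2 (f' f'' : ℝ → ℝ) (x y : ℝ) : ℝ :=
  if x = y then f'' x else (f' x - f' y) / (x - y)

section
open scoped Matrix.Norms.L2Operator
open Topology Filter

theorem aux_eventually_pos {n : ℕ} (a : ℝ → Matrix (Fin n) (Fin n) ℂ) (t : ℝ)
    (hc : ContinuousAt a t) (hp : spectrum ℝ (a t) ⊆ Set.Ioi 0) :
    ∀ᶠ s in 𝓝 t, spectrum ℝ (a s) ⊆ Set.Ioi 0 := by
  have h := (upperHemicontinuous_spectrum ℝ (Matrix (Fin n) (Fin n) ℂ)).upperHemicontinuousAt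
    (a t) (Set.Ioi 0) (isOpen_Ioi.mem_nhdsSet.2 hp)
  have h2 := hc.eventually h
  exact h2.mono fun s hs => subset_of_mem_nhdsSet hs

theorem aux_continuousAt_cfc {n : ℕ} (a : ℝ → Matrix (Fin n) (Fin n) ℂ) (t : ℝ)
    (hc : ContinuousAt a t) (hh : ∀ s, (a s).IsHermitian) (hp : spectrum ℝ (a t) ⊆ Set.Ioi 0)
    (φ : ℝ → ℝ) (hφ : ContinuousOn φ (Set.Ioi 0)) :
    ContinuousAt (fun s => cfc φ (a s)) t := by
  obtain ⟨S, ⟨hS₁, hS₂⟩, hS₃⟩ :=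
    (spectrum.isCompact (𝕜 := ℝ) (a t)).nhdsSet_basis_isCompact.mem_iff.mp
      (isOpen_Ioi.mem_nhdsSet.2 hp)
  have h := (upperHemicontinuous_spectrum ℝ (Matrix (Fin n) (Fin n) ℂ)).upperHemicontinuousAt
    (a t) S hS₁
  have h2 := hc.eventually h
  exact ContinuousAt.cfc hS₂ φ hc (h2.mono fun s hs => subset_of_mem_nhdsSet hs)
    (Eventually.of_forall fun s => (hh s)) (hφ.mono hS₃)

end

section
open Topology Filter

theorem aux_cfc_eq_sum {n : ℕ} {A : Matrix (Fin n) (Fin n) ℂ} (hA : A.IsHermitian)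
    (g : ℝ → ℝ) : cfc g A = ∑ i, ((g (hA.eigenvalues i) : ℝ) : ℂ) • specProj hA i := by
  rw [hA.cfc_eq, Matrix.IsHermitian.cfc, Unitary.conjStarAlgAut_apply]
  simp only [specProj]
  have hs : ∀ (c : ℂ) (U D V : Matrix (Fin n) (Fin n) ℂ), c • (U * D * V) = U * (c • D) * V := by
    intro c U D V
    rw [Matrix.mul_smul, Matrix.smul_mul]
  simp_rw [hs, ← Finset.sum_mul, ← Finset.mul_sum]
  congr 2
  ext j k
  rw [Matrix.sum_apply]
  by_cases h : j = k
  · subst h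
    simp [Matrix.diagonal_apply]
  · simp [Matrix.diagonal_apply, h]

theorem aux_sum_specProj {n : ℕ} {A : Matrix (Fin n) (Fin n) ℂ} (hA : A.IsHermitian) :
    ∑ i, specProj hA i = 1 := by
  have h := aux_cfc_eq_sum hA (fun _ => 1)
  rw [cfc_const_one ℝ A hA.isSelfAdjoint] at h
  simpa using h.symm

theorem aux_specProj_mul_specProj {n : ℕ} {A : Matrix (Fin n) (Fin n) ℂ} (hA : A.IsHermitian)
    (i j : Fin n) : specProj hA i * specProj hA j = if i = j then specProj hA i else 0 := by
  have hU : star (hA.eigenvectorUnitary : Matrix (Fin n) (Fin n) ℂ) *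
      (hA.eigenvectorUnitary : Matrix (Fin n) (Fin n) ℂ) = 1 :=
    Unitary.coe_star_mul_self _
  have : specProj hA i * specProj hA j = (hA.eigenvectorUnitary : Matrix (Fin n) (Fin n) ℂ) *
    (Matrix.diagonal (fun k => if k = i then (1 : ℂ) else 0) *
      Matrix.diagonal (fun k => if k = j then (1 : ℂ) else 0)) *
    star (hA.eigenvectorUnitary : Matrix (Fin n) (Fin n) ℂ) := by
    simp only [specProj, Matrix.mul_assoc]
    rw [← Matrix.mul_assoc (star _) (hA.eigenvectorUnitary : Matrix (Fin n) (Fin n) ℂ), hU,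
      Matrix.one_mul]
  rw [this, Matrix.diagonal_mul_diagonal]
  split_ifs with h
  · subst h
    have h3 : (fun k => (if k = i then (1 : ℂ) else 0) * (if k = i then (1 : ℂ) else 0)) =
        fun k => if k = i then (1 : ℂ) else 0 := by
      ext k
      split_ifs <;> simp
    rw [h3, specProj]
  · have : (fun k => (if k = i then (1 : ℂ) else 0) * (if k = j then (1 : ℂ) else 0)) = 0 := by
      ext k
      by_cases h1 : k = i
      · subst h1; simp [h]
      · simp [h1]
    rw [this]
    simp

theorem aux_specProj_mul_cfc {n : ℕ} {A : Matrix (Fin n) (Fin n) ℂ} (hA : A.IsHermitian)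
    (i : Fin n) (g : ℝ → ℝ) :
    specProj hA i * cfc g A = ((g (hA.eigenvalues i) : ℝ) : ℂ) • specProj hA i := by
  rw [aux_cfc_eq_sum hA, Finset.mul_sum]
  simp [aux_specProj_mul_specProj]

theorem aux_cont_any {n : ℕ} {C : Matrix (Fin n) (Fin n) ℂ} (g : ℝ → ℝ) :
    ContinuousOn g (spectrum ℝ C) := by
  exact (Matrix.finite_real_spectrum (A := C)).continuousOn g

theorem aux_diff {n : ℕ} {A C : Matrix (Fin n) (Fin n) ℂ} (hA : A.IsHermitian)
    (hC : C.IsHermitian) (g g' : ℝ → ℝ) :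
    cfc g C - cfc g A = ∑ i, specProj hA i * (C - A) *
      cfc (fun y => divDiff2 g g' (hA.eigenvalues i) y) C := by
  have key : ∀ i, specProj hA i * (C - A) *
      cfc (fun y => divDiff2 g g' (hA.eigenvalues i) y) C =
      specProj hA i * cfc g C - specProj hA i * cfc g A := by
    intro i
    have hPA : specProj hA i * A = specProj hA i *
        algebraMap ℝ _ (hA.eigenvalues i) := by
      have := aux_specProj_mul_cfc hA i id
      rw [cfc_id ℝ A hA.isSelfAdjoint] at this
      rw [this, Algebra.algebraMap_eq_smul_one]
      simp
    rw [mul_sub, hPA, ← mul_sub, mul_assoc, aux_specProj_mul_cfc]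
    have h1 : C - algebraMap ℝ _ (hA.eigenvalues i) =
        cfc (fun y => y - hA.eigenvalues i) C := by
      rw [cfc_sub _ _ C (aux_cont_any _) (aux_cont_any _), cfc_id' ℝ C hC.isSelfAdjoint, cfc_const _ C hC.isSelfAdjoint]
    rw [h1, ← cfc_mul _ _ C (aux_cont_any _) (aux_cont_any _)]
    have h2 : (fun y => (y - hA.eigenvalues i) * divDiff2 g g' (hA.eigenvalues i) y) =
        fun y => g y - g (hA.eigenvalues i) := by
      ext y
      unfold divDiff2
      split_ifs with h
      · simp [h]
      · have : hA.eigenvalues i - y ≠ 0 := sub_ne_zero.2 h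
        field_simp
        ring
    rw [h2, cfc_sub _ _ C (aux_cont_any _) (aux_cont_any _), cfc_const _ C hC.isSelfAdjoint, mul_sub,
      Algebra.algebraMap_eq_smul_one]
    simp
  simp_rw [key, ← mul_sub, ← Finset.sum_mul, aux_sum_specProj, one_mul]

theorem aux_divDiff_cont (g g' : ℝ → ℝ) (hg : ∀ x ∈ Set.Ioi (0 : ℝ), HasDerivAt g (g' x) x)
    (l : ℝ) (hl : 0 < l) : ContinuousOn (fun y => divDiff2 g g' l y) (Set.Ioi 0) := by
  have h : (fun y => divDiff2 g g' l y) = dslope g l := by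
    ext y
    unfold divDiff2
    split_ifs with h
    · subst h; simp [(hg _ hl).deriv]
    · rw [dslope_of_ne _ (Ne.symm h), slope_def_field, ← neg_sub, ← neg_sub y l, neg_div_neg_eq]
  rw [h, continuousOn_dslope (Ioi_mem_nhds hl)]
  exact ⟨fun x hx => (hg x hx).continuousAt.continuousWithinAt, (hg l hl).differentiableAt⟩

theorem aux_hasDerivAt {n : ℕ} (g g' : ℝ → ℝ)
    (hg : ∀ x ∈ Set.Ioi (0 : ℝ), HasDerivAt g (g' x) x)
    (a : ℝ → Matrix (Fin n) (Fin n) ℂ) (B D : Matrix (Fin n) (Fin n) ℂ) (t : ℝ)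
    (hab : ∀ s, a s - a t = (s - t) • B)
    (hc : ContinuousAt a t) (hh : ∀ s, (a s).IsHermitian) (hp : spectrum ℝ (a t) ⊆ Set.Ioi 0) :
    HasDerivAt (fun s => (Matrix.trace (cfc g (a s) * D)).re)
      (∑ i, ∑ j, divDiff2 g g' ((hh t).eigenvalues i) ((hh t).eigenvalues j) *
        (Matrix.trace (specProj (hh t) i * B * specProj (hh t) j * D)).re) t := by
  rw [hasDerivAt_iff_tendsto_slope]
  have hpos : ∀ i, 0 < (hh t).eigenvalues i := fun i =>
    hp ((hh t).eigenvalues_mem_spectrum_real i)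
  have hcont : ContinuousAt (fun s => (Matrix.trace ((∑ i, specProj (hh t) i * B *
      cfc (fun y => divDiff2 g g' ((hh t).eigenvalues i) y) (a s)) * D)).re) t := by
    have hi : ∀ i, ContinuousAt (fun s =>
        cfc (fun y => divDiff2 g g' ((hh t).eigenvalues i) y) (a s)) t := fun i =>
      aux_continuousAt_cfc a t hc hh hp _ (aux_divDiff_cont g g' hg _ (hpos i))
    have hM : ContinuousAt (fun s => (∑ i, specProj (hh t) i * B *
      cfc (fun y => divDiff2 g g' ((hh t).eigenvalues i) y) (a s)) * D) t := by
      refine ContinuousAt.mul ?_ continuousAt_const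
      exact tendsto_finsetSum _ fun i _ => (continuousAt_const.mul (hi i))
    have hT : Continuous (fun M : Matrix (Fin n) (Fin n) ℂ => (Matrix.trace M).re) :=
      Complex.continuous_re.comp (continuous_id.matrix_trace)
    exact hT.continuousAt.comp hM
  have hval : (∑ i, ∑ j, divDiff2 g g' ((hh t).eigenvalues i) ((hh t).eigenvalues j) *
        (Matrix.trace (specProj (hh t) i * B * specProj (hh t) j * D)).re) =
      (Matrix.trace ((∑ i, specProj (hh t) i * B *
      cfc (fun y => divDiff2 g g' ((hh t).eigenvalues i) y) (a t)) * D)).re := by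
    rw [Finset.sum_mul, Matrix.trace_sum, Complex.re_sum]
    refine Finset.sum_congr rfl fun i _ => ?_
    rw [aux_cfc_eq_sum (hh t), Finset.mul_sum, Finset.sum_mul, Matrix.trace_sum, Complex.re_sum]
    refine Finset.sum_congr rfl fun j _ => ?_
    rw [Matrix.mul_smul, Matrix.smul_mul, Matrix.trace_smul, smul_eq_mul, Complex.re_ofReal_mul]
  rw [hval]
  refine (hcont.tendsto.mono_left nhdsWithin_le_nhds).congr' ?_
  filter_upwards [self_mem_nhdsWithin] with s hs
  have hs' : s - t ≠ 0 := sub_ne_zero.2 hs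
  rw [slope_def_field, ← Complex.sub_re, ← Matrix.trace_sub, ← sub_mul,
    aux_diff (hh t) (hh s) g g', hab s]
  simp_rw [Matrix.mul_smul, Matrix.smul_mul, ← Finset.smul_sum, Matrix.smul_mul,
    Matrix.trace_smul, Complex.smul_re, smul_eq_mul]
  field_simp

theorem aux_first {n : ℕ} {A : Matrix (Fin n) (Fin n) ℂ} (hA : A.IsHermitian) (f f' : ℝ → ℝ)
    (B : Matrix (Fin n) (Fin n) ℂ) :
    (∑ i, ∑ j, divDiff2 f f' (hA.eigenvalues i) (hA.eigenvalues j) *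
        (Matrix.trace (specProj hA i * B * specProj hA j * 1)).re) =
      (Matrix.trace (cfc f' A * B)).re := by
  rw [aux_cfc_eq_sum hA, Finset.sum_mul, Matrix.trace_sum, Complex.re_sum]
  refine Finset.sum_congr rfl fun i _ => ?_
  rw [Finset.sum_eq_single i]
  · rw [mul_one, Matrix.trace_mul_comm, ← mul_assoc, aux_specProj_mul_specProj, if_pos rfl,
      Matrix.smul_mul, Matrix.trace_smul, smul_eq_mul, Complex.re_ofReal_mul]
    simp [divDiff2]
  · intro j _ hj
    rw [mul_one, Matrix.trace_mul_comm, ← mul_assoc, aux_specProj_mul_specProj, if_neg hj]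
    simp
  · simp

end

/-- second derivative of `t ↦ tr f((1−t)σ + tρ)` as a Schur multiplier:
`d²/dt² tr f(a(t)) = ∑_{i,j} f^{[2]}(λᵢ(t),λⱼ(t)) tr(Pᵢ(t)(ρ−σ)Pⱼ(t)(ρ−σ))`, where `λᵢ(t)`,
`Pᵢ(t)` are the eigenvalues and spectral projections of `a(t) = (1−t)σ + tρ`. -/
theorem second_deriv_trace_eq_schur_multiplier {n : ℕ}
    (f f' f'' : ℝ → ℝ)
    (hf' : ∀ x ∈ Set.Ioi (0 : ℝ), HasDerivAt f (f' x) x)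
    (hf'' : ∀ x ∈ Set.Ioi (0 : ℝ), HasDerivAt f' (f'' x) x)
    (hf''_cont : ContinuousOn f'' (Set.Ioi 0))
    (ρ σ : Matrix (Fin n) (Fin n) ℂ) (hρ : ρ.PosDef) (hσ : σ.PosDef)
    (a : ℝ → Matrix (Fin n) (Fin n) ℂ)
    (ha : ∀ s : ℝ, a s = (((1 - s : ℝ)) : ℂ) • σ + ((s : ℝ) : ℂ) • ρ)
    (H : ℝ → ℝ) (hH : ∀ s : ℝ, H s = (Matrix.trace (cfc f (a s))).re)
    (t : ℝ) (ht : t ∈ Set.Icc (0 : ℝ) 1) (hat : (a t).IsHermitian) :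
    deriv (deriv H) t = ∑ i, ∑ j,
      divDiff2 f' f'' (hat.eigenvalues i) (hat.eigenvalues j) *
        (Matrix.trace (specProj hat i * (ρ - σ) * specProj hat j * (ρ - σ))).re := by
  have hab : ∀ u s, a s - a u = (s - u) • (ρ - σ) := by
    intro u s
    ext i j
    simp only [ha, Matrix.sub_apply, Matrix.add_apply, Matrix.smul_apply, smul_eq_mul,
      Complex.real_smul]
    push_cast
    ring
  have hh : ∀ s, (a s).IsHermitian := by
    intro s
    rw [ha, Matrix.IsHermitian, Matrix.conjTranspose_add, Matrix.conjTranspose_smul,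
      Matrix.conjTranspose_smul, hσ.1.eq, hρ.1.eq]
    simp
  have hc : Continuous a := by
    have : a = fun s => (((1 - s : ℝ)) : ℂ) • σ + ((s : ℝ) : ℂ) • ρ := funext ha
    rw [this]
    fun_prop
  have hpd : (a t).PosDef := by
    rw [ha]
    have e1 : (((1 - t : ℝ)) : ℂ) • σ = (1 - t : ℝ) • σ := by ext; simp
    have e2 : ((t : ℝ) : ℂ) • ρ = t • ρ := by ext; simp
    rcases eq_or_lt_of_le ht.1 with h0 | h0
    · simpa [← h0] using hσ
    · refine Matrix.PosDef.posSemidef_add ?_ ?_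
      · rw [e1]
        exact hσ.posSemidef.smul (sub_nonneg.2 ht.2)
      · rw [e2]
        exact hρ.smul h0
  have hp : spectrum ℝ (a t) ⊆ Set.Ioi 0 := by
    rw [hat.spectrum_real_eq_range_eigenvalues]
    rintro _ ⟨i, rfl⟩
    exact hpd.eigenvalues_pos i
  have h1 : deriv H =ᶠ[nhds t] fun s => (Matrix.trace (cfc f' (a s) * (ρ - σ))).re := by
    filter_upwards [aux_eventually_pos a t hc.continuousAt hp] with s hs
    have h := aux_hasDerivAt f f' hf' a (ρ - σ) 1 s (hab s) hc.continuousAt hh hs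
    rw [aux_first] at h
    have hH' : H = fun s => (Matrix.trace (cfc f (a s) * 1)).re := by
      ext s; rw [hH, mul_one]
    rw [hH']
    exact h.deriv
  rw [h1.deriv_eq]
  exact (aux_hasDerivAt f' f'' hf'' a (ρ - σ) (ρ - σ) t (hab t) hc.continuousAt hh hp).deriv
end

section
/- Let T_t = e^{−tA} be a semigroup of self-adjoint unital completely positive maps on M_n(ℂ) with fixed point algebra N_fix and conditional expectation E onto N_fix, and f : (0,∞)→(0,∞) a C¹ convex function. Suppose there is λ > 0 such that the f-Fisher information satisfies I_A^f(T_t(ρ)) ≤ e^{−λt} I_A^f(ρ) for all positive definite ρ and t ≥ 0. Then d^f(T_t(ρ)‖E(ρ)) ≤ e^{−λt} d^f(ρ‖E(ρ)) for all positive definite ρ; in particular λ d^f(ρ‖E(ρ)) ≤ I_A^f(ρ). -/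
open Matrix
open scoped ComplexOrder

/-- The amplification `id_{M_k} ⊗ β` of a linear map on a matrix algebra. -/
def amplify {n : ℕ} (β : Matrix (Fin n) (Fin n) ℂ →ₗ[ℂ] Matrix (Fin n) (Fin n) ℂ) (k : ℕ)
    (x : Matrix (Fin k × Fin n) (Fin k × Fin n) ℂ) :
    Matrix (Fin k × Fin n) (Fin k × Fin n) ℂ :=
  Matrix.of fun p q => β (Matrix.of fun a b => x (p.1, a) (q.1, b)) p.2 q.2

/-- A linear map on a matrix algebra is completely positive if all its amplifications
preserve positive semidefiniteness. -/
def IsCP {n : ℕ} (β : Matrix (Fin n) (Fin n) ℂ →ₗ[ℂ] Matrix (Fin n) (Fin n) ℂ) : Prop :=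
  ∀ (k : ℕ) (x : Matrix (Fin k × Fin n) (Fin k × Fin n) ℂ), x.PosSemidef →
    (amplify β k x).PosSemidef

/-- The `f`-Fisher information `I_A^f(ρ) = tr(A(ρ) f'(ρ))` of a generator `A`. -/
noncomputable def fisherInfo {n : ℕ} (A : Matrix (Fin n) (Fin n) ℂ →ₗ[ℂ] Matrix (Fin n) (Fin n) ℂ)
    (f' : ℝ → ℝ) (ρ : Matrix (Fin n) (Fin n) ℂ) : ℝ :=
  ((A ρ * cfc f' ρ).trace).re

open scoped Topology
open Filter

namespace FisherDecay

variable {n : ℕ}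

theorem cp_pos {β : Matrix (Fin n) (Fin n) ℂ →ₗ[ℂ] Matrix (Fin n) (Fin n) ℂ} (h : IsCP β)
    {x : Matrix (Fin n) (Fin n) ℂ} (hx : x.PosSemidef) : (β x).PosSemidef := by
  have h1 := h 1 (x.submatrix Prod.snd Prod.snd) (hx.submatrix _)
  have h2 := h1.submatrix (fun a : Fin n => ((0 : Fin 1), a))
  have e : (amplify β 1 (x.submatrix Prod.snd Prod.snd)).submatrix
      (fun a : Fin n => ((0 : Fin 1), a)) (fun a : Fin n => ((0 : Fin 1), a)) = β x := by
    ext i j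
    rfl
  rwa [e] at h2

/-- The row block matrix `(x, 1)`. -/
def rowB (x : Matrix (Fin n) (Fin n) ℂ) : Matrix (Fin n) (Fin 2 × Fin n) ℂ :=
  Matrix.of fun a p => if p.1 = 0 then x a p.2 else (1 : Matrix (Fin n) (Fin n) ℂ) a p.2

/-- The column block matrix `(1, -y)`. -/
def colC (y : Matrix (Fin n) (Fin n) ℂ) : Matrix (Fin 2 × Fin n) (Fin n) ℂ :=
  Matrix.of fun p a => if p.1 = 0 then (1 : Matrix (Fin n) (Fin n) ℂ) p.2 a else - y p.2 a

theorem amp_entry (β : Matrix (Fin n) (Fin n) ℂ →ₗ[ℂ] Matrix (Fin n) (Fin n) ℂ)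
    (x : Matrix (Fin n) (Fin n) ℂ) (p q : Fin 2 × Fin n) :
    amplify β 2 ((rowB x)ᴴ * rowB x) p q =
      (β ((if p.1 = 0 then xᴴ else 1) * (if q.1 = 0 then x else 1))) p.2 q.2 := by
  unfold amplify
  simp only [Matrix.of_apply]
  obtain ⟨p1, p2⟩ := p
  obtain ⟨q1, q2⟩ := q
  refine congrFun (congrFun (congrArg β ?_) p2) q2
  ext a b
  fin_cases p1 <;> fin_cases q1 <;>
    simp [rowB, Matrix.mul_apply, Matrix.one_apply, eq_comm]

theorem cp_star {β : Matrix (Fin n) (Fin n) ℂ →ₗ[ℂ] Matrix (Fin n) (Fin n) ℂ} (h : IsCP β)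
    (x : Matrix (Fin n) (Fin n) ℂ) : β xᴴ = (β x)ᴴ := by
  have h1 := (h 2 _ (Matrix.posSemidef_conjTranspose_mul_self (rowB x))).1
  ext i j
  have := congrFun (congrFun h1 (0, i)) (1, j)
  rw [Matrix.conjTranspose_apply, amp_entry, amp_entry] at this
  simp at this
  rw [Matrix.conjTranspose_apply, ← this]
  rfl

theorem cp_schwarz {β : Matrix (Fin n) (Fin n) ℂ →ₗ[ℂ] Matrix (Fin n) (Fin n) ℂ} (h : IsCP β)
    (h1 : β 1 = 1) (x : Matrix (Fin n) (Fin n) ℂ) :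
    (β (xᴴ * x) - (β x)ᴴ * β x).PosSemidef := by
  have h2 := (h 2 _ (Matrix.posSemidef_conjTranspose_mul_self (rowB x)))
  have h3 := h2.conjTranspose_mul_mul_same (colC (β x))
  convert h3 using 1
  rw [← cp_star h]
  ext i j
  simp only [Matrix.mul_apply, amp_entry, Fintype.sum_prod_type, Fin.sum_univ_two, colC,
    Matrix.sub_apply, Matrix.conjTranspose_apply, Matrix.of_apply]
  simp [Matrix.one_apply, h1, apply_ite, ite_mul]
  rw [← sub_eq_add_neg, ← Finset.sum_neg_distrib, ← sub_eq_zero]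
  have key : ∀ k, (β xᴴ) i k = star ((β x) k i) := fun k => by rw [cp_star h]; rfl
  simp [key]
  ring

/-- The contraction property. -/
theorem cp_contr {β : Matrix (Fin n) (Fin n) ℂ →ₗ[ℂ] Matrix (Fin n) (Fin n) ℂ} (h : IsCP β)
    (h1 : β 1 = 1) (htr : ∀ x, (β x).trace = x.trace) (x : Matrix (Fin n) (Fin n) ℂ) :
    ((β x)ᴴ * β x).trace.re ≤ (xᴴ * x).trace.re := by
  have := (cp_schwarz h h1 x).trace_nonneg
  rw [Matrix.trace_sub, htr] at this
  have := (Complex.le_def.1 this).1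
  simp at this
  exact this

theorem fix_sq {β : Matrix (Fin n) (Fin n) ℂ →ₗ[ℂ] Matrix (Fin n) (Fin n) ℂ} (h : IsCP β)
    (h1 : β 1 = 1) (htr : ∀ x, (β x).trace = x.trace) {x : Matrix (Fin n) (Fin n) ℂ}
    (hx : x.IsHermitian) (hf : β x = x) : β (x * x) = x * x := by
  have h2 := cp_schwarz h h1 x
  rw [hf, hx.eq] at h2
  have := h2.trace_eq_zero_iff.1 (by rw [Matrix.trace_sub, htr, sub_self])
  exact sub_eq_zero.1 this

theorem fix_pow {β : Matrix (Fin n) (Fin n) ℂ →ₗ[ℂ] Matrix (Fin n) (Fin n) ℂ} (h : IsCP β)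
    (h1 : β 1 = 1) (htr : ∀ x, (β x).trace = x.trace) {x : Matrix (Fin n) (Fin n) ℂ}
    (hx : x.IsHermitian) (hf : β x = x) (k : ℕ) : β (x ^ k) = x ^ k := by
  induction k with
  | zero => simpa using h1
  | succ k ih =>
    have hk : (x ^ k).IsHermitian := hx.pow k
    have a := fix_sq h h1 htr (hx.add hk) (by rw [map_add, hf, ih])
    have b := fix_sq h h1 htr hx hf
    have c := fix_sq h h1 htr hk ih
    have e : (x + x ^ k) * (x + x ^ k) = x * x + x ^ k * x ^ k + (2 : ℂ) • x ^ (k+1) := by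
      rw [two_smul, pow_succ, mul_add, add_mul, add_mul, (Commute.self_pow x k).eq]
      abel
    rw [e, map_add, map_add, b, c, map_smul] at a
    have := add_left_cancel a
    exact smul_right_injective _ (two_ne_zero) this

theorem fix_cfc {β : Matrix (Fin n) (Fin n) ℂ →ₗ[ℂ] Matrix (Fin n) (Fin n) ℂ} (h : IsCP β)
    (h1 : β 1 = 1) (htr : ∀ x, (β x).trace = x.trace) {x : Matrix (Fin n) (Fin n) ℂ}
    (hx : x.IsHermitian) (hf : β x = x) (g : ℝ → ℝ) : β (cfc g x) = cfc g x := by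
  have hfin : (spectrum ℝ x).Finite := Matrix.finite_real_spectrum
  let p : Polynomial ℝ := Lagrange.interpolate hfin.toFinset id g
  have e : cfc g x = Polynomial.aeval x p := by
    rw [← cfc_polynomial p x hx]
    apply cfc_congr
    intro y hy
    exact (Lagrange.eval_interpolate_at_node (s := hfin.toFinset) (v := id) g
      (Set.injOn_id _) (hfin.mem_toFinset.2 hy)).symm
  rw [e, Polynomial.aeval_eq_sum_range, map_sum]
  refine Finset.sum_congr rfl fun k _ => ?_
  rw [← Complex.coe_smul, map_smul, fix_pow h h1 htr hx hf]

theorem tangent {f f' : ℝ → ℝ} (hf_conv : ConvexOn ℝ (Set.Ioi 0) f)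
    (hf_deriv : ∀ x ∈ Set.Ioi (0 : ℝ), HasDerivAt f (f' x) x) {a b : ℝ} (ha : 0 < a) (hb : 0 < b) :
    (a - b) * f' b ≤ f a - f b := by
  rcases lt_trichotomy a b with h | h | h
  · have := hf_conv.slope_le_of_hasDerivAt ha hb h (hf_deriv b hb)
    rw [slope_def_field, div_le_iff₀ (by linarith)] at this
    linarith
  · simp [h]
  · have := hf_conv.le_slope_of_hasDerivAt hb ha h (hf_deriv b hb)
    rw [slope_def_field, le_div_iff₀ (by linarith)] at this
    linarith

theorem trace_weights {x y : Matrix (Fin n) (Fin n) ℂ} (hx : x.IsHermitian) (hy : y.IsHermitian) :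
    ∃ w : Fin n → Fin n → ℝ, (∀ i j, 0 ≤ w i j) ∧ ∀ g h : ℝ → ℝ,
      (cfc g x * cfc h y).trace.re =
        ∑ i, ∑ j, w i j * (g (hx.eigenvalues i) * h (hy.eigenvalues j)) := by
  let U : Matrix (Fin n) (Fin n) ℂ := hx.eigenvectorUnitary
  let V : Matrix (Fin n) (Fin n) ℂ := hy.eigenvectorUnitary
  let W : Matrix (Fin n) (Fin n) ℂ := star U * V
  refine ⟨fun i j => Complex.normSq (W i j), fun i j => Complex.normSq_nonneg _, fun g h => ?_⟩
  rw [hx.cfc_eq, hy.cfc_eq, Matrix.IsHermitian.cfc, Matrix.IsHermitian.cfc,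
    Unitary.conjStarAlgAut_apply, Unitary.conjStarAlgAut_apply]
  change ((U * Matrix.diagonal _ * star U) * (V * Matrix.diagonal _ * star V)).trace.re = _
  have e : ∀ D D' : Matrix (Fin n) (Fin n) ℂ,
      ((U * D * star U) * (V * D' * star V)).trace = (D * W * D' * star W).trace := by
    intro D D'
    have : (U * D * star U) * (V * D' * star V) = U * (D * star U * V * D' * star V) := by
      simp only [Matrix.mul_assoc]
    rw [this, Matrix.trace_mul_comm]
    simp only [W, star_mul, star_star, Matrix.mul_assoc]
  rw [e, Matrix.trace, Complex.re_sum]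
  refine Finset.sum_congr rfl fun i _ => ?_
  rw [Matrix.diag_apply, Matrix.mul_apply, Complex.re_sum]
  refine Finset.sum_congr rfl fun j _ => ?_
  rw [Matrix.mul_diagonal, Matrix.diagonal_mul, Matrix.star_apply, mul_right_comm, mul_assoc _ (W i j)]
  have : W i j * star (W i j) = (Complex.normSq (W i j) : ℂ) := Complex.mul_conj _
  rw [this]
  simp
  ring

/-- Klein's inequality. -/
theorem klein {f f' : ℝ → ℝ} (hf_conv : ConvexOn ℝ (Set.Ioi 0) f)
    (hf_deriv : ∀ x ∈ Set.Ioi (0 : ℝ), HasDerivAt f (f' x) x)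
    {x y : Matrix (Fin n) (Fin n) ℂ} (hx : x.PosDef) (hy : y.PosDef) :
    ((x - y) * cfc f' y).trace.re ≤ (cfc f x).trace.re - (cfc f y).trace.re := by
  have hx' : IsSelfAdjoint x := hx.1
  have hy' : IsSelfAdjoint y := hy.1
  obtain ⟨w, hw, hT⟩ := trace_weights hx.1 hy.1
  have h1 : (cfc f x).trace.re = ∑ i, ∑ j, w i j * (f (hx.1.eigenvalues i) * 1) := by
    rw [← hT f (fun _ => 1), cfc_const_one ℝ y hy', mul_one]
  have h2 : (cfc f y).trace.re = ∑ i, ∑ j, w i j * (1 * f (hy.1.eigenvalues j)) := by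
    rw [← hT (fun _ => 1) f, cfc_const_one ℝ x hx', one_mul]
  have h3 : (x * cfc f' y).trace.re =
      ∑ i, ∑ j, w i j * (hx.1.eigenvalues i * f' (hy.1.eigenvalues j)) := by
    rw [← hT (fun a => a) f', cfc_id' ℝ x hx']
  have h4 : (y * cfc f' y).trace.re =
      ∑ i, ∑ j, w i j * (1 * (hy.1.eigenvalues j * f' (hy.1.eigenvalues j))) := by
    rw [← hT (fun _ => 1) (fun a => a * f' a), cfc_const_one ℝ x hx', one_mul,
      cfc_mul (fun a => a) f' y (by fun_prop)
        (Matrix.finite_real_spectrum.continuousOn _), cfc_id' ℝ y hy']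
  rw [sub_mul, Matrix.trace_sub, Complex.sub_re, h1, h2, h3, h4, ← Finset.sum_sub_distrib,
    ← Finset.sum_sub_distrib]
  refine Finset.sum_le_sum fun i _ => ?_
  rw [← Finset.sum_sub_distrib, ← Finset.sum_sub_distrib]
  refine Finset.sum_le_sum fun j _ => ?_
  rw [← mul_sub, ← mul_sub]
  refine mul_le_mul_of_nonneg_left ?_ (hw i j)
  have := tangent hf_conv hf_deriv (hx.eigenvalues_pos i) (hy.eigenvalues_pos j)
  linarith

open scoped Matrix.Norms.L2Operator in
theorem cfc_tendsto {X : Type*} {l : Filter X} {a : X → Matrix (Fin n) (Fin n) ℂ}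
    {a₀ : Matrix (Fin n) (Fin n) ℂ} {c C : ℝ} (h : Tendsto a l (𝓝 a₀))
    (ha : ∀ᶠ s in l, (a s).IsHermitian ∧ spectrum ℝ (a s) ⊆ Set.Icc c C)
    (h0 : a₀.IsHermitian) (h0' : spectrum ℝ a₀ ⊆ Set.Icc c C) {g : ℝ → ℝ}
    (hg : ContinuousOn g (Set.Icc c C)) :
    Tendsto (fun s => cfc g (a s)) l (𝓝 (cfc g a₀)) :=
  Filter.Tendsto.cfc isCompact_Icc g h (ha.mono fun _ h => h.2) (ha.mono fun _ h => h.1)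
    h0' h0 hg

open scoped MatrixOrder in
theorem spec_iff {x : Matrix (Fin n) (Fin n) ℂ} (hx : x.IsHermitian) (c C : ℝ) :
    spectrum ℝ x ⊆ Set.Icc c C ↔ 
      (x - (c : ℂ) • 1).PosSemidef ∧ ((C : ℂ) • 1 - x).PosSemidef := by
  have h1 := algebraMap_le_iff_le_spectrum (r := c) (a := x) hx
  have h2 := le_algebraMap_iff_spectrum_le (r := C) (a := x) hx
  rw [Matrix.le_iff, Algebra.algebraMap_eq_smul_one, ← Complex.coe_smul] at h1 h2
  rw [h1, h2]
  exact ⟨fun h => ⟨fun y hy => (h hy).1, fun y hy => (h hy).2⟩, fun h y hy => ⟨h.1 y hy, h.2 y hy⟩⟩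

theorem posdef_spec {x : Matrix (Fin n) (Fin n) ℂ} (hx : x.PosDef) :
    ∃ c C : ℝ, 0 < c ∧ spectrum ℝ x ⊆ Set.Icc c C := by
  have hr := hx.1.spectrum_real_eq_range_eigenvalues
  rcases isEmpty_or_nonempty (Fin n) with h | h
  · refine ⟨1, 1, one_pos, ?_⟩
    rw [hr]; simp
  · obtain ⟨i, hi⟩ := Finite.exists_min hx.1.eigenvalues
    obtain ⟨j, hj⟩ := Finite.exists_max hx.1.eigenvalues
    refine ⟨hx.1.eigenvalues i, hx.1.eigenvalues j, hx.eigenvalues_pos i, ?_⟩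
    rw [hr]
    rintro _ ⟨k, rfl⟩
    exact ⟨hi k, hj k⟩

theorem spec_posdef {x : Matrix (Fin n) (Fin n) ℂ} (hx : x.IsHermitian) {c C : ℝ} (hc : 0 < c)
    (h : spectrum ℝ x ⊆ Set.Icc c C) : x.PosDef :=
  hx.posDef_iff_eigenvalues_pos.2 fun i =>
    lt_of_lt_of_le hc (h (hx.eigenvalues_mem_spectrum_real i)).1

theorem fisher_deriv {f f' : ℝ → ℝ} (hf_conv : ConvexOn ℝ (Set.Ioi 0) f)
    (hf_deriv : ∀ x ∈ Set.Ioi (0 : ℝ), HasDerivAt f (f' x) x)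
    (hf'_cont : ContinuousOn f' (Set.Ioi 0)) {c C : ℝ} (hc : 0 < c)
    (r : ℝ → Matrix (Fin n) (Fin n) ℂ) (r' : Matrix (Fin n) (Fin n) ℂ)
    (hr : ∀ s, 0 ≤ s → (r s).IsHermitian ∧ spectrum ℝ (r s) ⊆ Set.Icc c C)
    {t : ℝ} (ht : 0 ≤ t)
    (hd : ∀ i j, HasDerivAt (fun s => r s i j) (r' i j) t) :
    HasDerivWithinAt (fun s => (cfc f (r s)).trace.re) ((r' * cfc f' (r t)).trace.re)
      (Set.Ici 0) t := by
  have hpd : ∀ s, 0 ≤ s → (r s).PosDef := fun s hs => spec_posdef (hr s hs).1 hc (hr s hs).2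
  have hrt : Tendsto r (𝓝[Set.Ici 0] t) (𝓝 (r t)) := by
    refine Tendsto.mono_left ?_ nhdsWithin_le_nhds
    exact tendsto_pi_nhds.2 fun i => tendsto_pi_nhds.2 fun j => (hd i j).continuousAt
  have hg : Tendsto (fun s => cfc f' (r s)) (𝓝[Set.Ici 0] t) (𝓝 (cfc f' (r t))) :=
    cfc_tendsto hrt (eventually_mem_nhdsWithin.mono fun s hs => hr s hs) (hr t ht).1 (hr t ht).2
      (hf'_cont.mono fun y hy => lt_of_lt_of_le hc hy.1)
  have hψ : HasDerivWithinAt (fun s => (r s * cfc f' (r t)).trace.re)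
      ((r' * cfc f' (r t)).trace.re) (Set.Ici 0) t := by
    have h1 : HasDerivAt (fun s => (r s * cfc f' (r t)).trace) ((r' * cfc f' (r t)).trace) t := by
      simp only [Matrix.trace, Matrix.diag_apply, Matrix.mul_apply]
      exact HasDerivAt.fun_sum fun i _ => HasDerivAt.fun_sum fun j _ => (hd i j).mul_const _
    exact (Complex.reCLM.hasFDerivAt.comp_hasDerivAt t h1).hasDerivWithinAt
  have hR : (fun s => ((r s - r t) * (cfc f' (r s) - cfc f' (r t))).trace)
      =o[𝓝[Set.Ici 0] t] fun s => s - t := by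
    simp only [Matrix.trace, Matrix.diag_apply, Matrix.mul_apply]
    refine Asymptotics.IsLittleO.fun_sum (E' := ℂ) fun i _ =>
      Asymptotics.IsLittleO.fun_sum (E' := ℂ) fun j _ => ?_
    have a : (fun s => (r s - r t) i j) =O[𝓝[Set.Ici 0] t] fun s => s - t :=
      ((hd i j).differentiableAt.isBigO_sub).mono nhdsWithin_le_nhds
    have b : (fun s => (cfc f' (r s) - cfc f' (r t)) j i) =o[𝓝[Set.Ici 0] t] fun _ => (1 : ℝ) := by
      rw [Asymptotics.isLittleO_one_iff]
      have := tendsto_pi_nhds.1 (tendsto_pi_nhds.1 hg j) i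
      simpa using this.sub_const (cfc f' (r t) j i)
    simpa using a.mul_isLittleO b
  have h0 : HasDerivWithinAt (fun s => (cfc f (r s)).trace.re - (r s * cfc f' (r t)).trace.re) 0
      (Set.Ici 0) t := by
    rw [hasDerivWithinAt_iff_isLittleO]
    refine Asymptotics.IsLittleO.trans_isBigO ?_ (Asymptotics.isBigO_refl _ _)
    refine Asymptotics.IsBigO.trans_isLittleO ?_ hR
    refine Asymptotics.IsBigO.of_bound 1 ?_
    refine eventually_mem_nhdsWithin.mono fun s hs => ?_
    have k1 := klein hf_conv hf_deriv (hpd s hs) (hpd t ht)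
    have k2 := klein hf_conv hf_deriv (hpd t ht) (hpd s hs)
    rw [one_mul]
    refine le_trans ?_ (Complex.abs_re_le_norm _)
    rw [Real.norm_eq_abs]
    simp only [sub_mul, mul_sub, Matrix.trace_sub, Complex.sub_re, smul_zero, sub_zero] at k1 k2 ⊢
    rw [abs_of_nonneg (by linarith)]
    refine le_trans ?_ (le_abs_self _)
    linarith
  simpa using h0.fun_add hψ

theorem q_ge (z : Matrix (Fin n) (Fin n) ℂ) (i j : Fin n) : ‖z i j‖ ^ 2 ≤ (zᴴ * z).trace.re := by
  have e : (zᴴ * z).trace.re = ∑ b, ∑ a, ‖z a b‖ ^ 2 := by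
    simp only [Matrix.trace, Matrix.diag_apply, Matrix.mul_apply, Complex.re_sum]
    refine Finset.sum_congr rfl fun b _ => Finset.sum_congr rfl fun a _ => ?_
    rw [Matrix.conjTranspose_apply, ← Complex.normSq_eq_norm_sq, Complex.normSq_apply]
    simp
  rw [e]
  refine le_trans ?_ (Finset.single_le_sum (f := fun b => ∑ a, ‖z a b‖ ^ 2)
    (fun b _ => Finset.sum_nonneg fun a _ => by positivity) (Finset.mem_univ j))
  exact Finset.single_le_sum (f := fun a => ‖z a j‖ ^ 2) (fun a _ => by positivity)
    (Finset.mem_univ i)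

theorem semigroup_tendsto
    (T : ℝ → (Matrix (Fin n) (Fin n) ℂ →ₗ[ℂ] Matrix (Fin n) (Fin n) ℂ))
    (E : Matrix (Fin n) (Fin n) ℂ →ₗ[ℂ] Matrix (Fin n) (Fin n) ℂ)
    (hTsem : ∀ s t : ℝ, 0 ≤ s → 0 ≤ t → ∀ x, T (s + t) x = T s (T t x))
    (hcontr : ∀ t : ℝ, 0 ≤ t → ∀ x, ((T t x)ᴴ * T t x).trace.re ≤ (xᴴ * x).trace.re)
    (hTsa : ∀ t : ℝ, 0 ≤ t → ∀ x y, (star (T t x) * y).trace = (star x * T t y).trace)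
    (hET : ∀ t : ℝ, 0 ≤ t → ∀ x, E (T t x) = E x)
    (hEfix : ∀ x, (∀ t : ℝ, 0 ≤ t → T t x = x) → E x = x)
    (x : Matrix (Fin n) (Fin n) ℂ) : Tendsto (fun t => T t x) atTop (𝓝 (E x)) := by
  set h : ℝ → ℝ := fun t => (xᴴ * T t x).trace.re with hh
  have hst : ∀ s t, 0 ≤ s → 0 ≤ t → ((T s x)ᴴ * T t x).trace.re = h (s + t) := by
    intro s t hs ht
    have := hTsa s hs x (T t x)
    simp only [hh]
    rw [hTsem s t hs ht]
    exact congrArg Complex.re this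
  have hq : ∀ t, 0 ≤ t → h t = ((T (t/2) x)ᴴ * T (t/2) x).trace.re := by
    intro t ht
    rw [hst _ _ (by linarith) (by linarith)]
    congr 1; ring
  have hanti : ∀ s t, 0 ≤ s → s ≤ t → h t ≤ h s := by
    intro s t hs hst
    rw [hq t (by linarith), hq s hs]
    have : t / 2 = (t - s) / 2 + s / 2 := by ring
    rw [this, hTsem _ _ (by linarith) (by linarith)]
    exact hcontr _ (by linarith) _
  have hnn : ∀ t, 0 ≤ t → 0 ≤ h t := by
    intro t ht
    rw [hq t ht]
    exact (Complex.le_def.1 (Matrix.posSemidef_conjTranspose_mul_self _).trace_nonneg).1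
  have hA : Antitone fun t => h (max t 0) := fun s t hst =>
    hanti _ _ (le_max_right _ _) (max_le_max_right 0 hst)
  have hlim := tendsto_atTop_ciInf hA ⟨0, by
    rintro _ ⟨t, rfl⟩
    exact hnn _ (le_max_right _ _)⟩
  set L := ⨅ t, h (max t 0)
  have hc : ∀ i j, CauchySeq fun t => T t x i j := by
    intro i j
    rw [Metric.cauchySeq_iff']
    intro ε hε
    obtain ⟨N, hN⟩ := (Metric.tendsto_atTop.1 hlim) (ε ^ 2 / 4) (by positivity)
    have hN' : ∀ t, max N 0 ≤ t → |h t - L| < ε ^ 2 / 4 := by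
      intro t ht
      have := hN t (le_trans (le_max_left _ _) ht)
      rwa [max_eq_left (le_trans (le_max_right _ _) ht), Real.dist_eq] at this
    refine ⟨max N 0, fun t ht => ?_⟩
    set M := max N 0
    have hM : 0 ≤ M := le_max_right _ _
    have ht : M ≤ t := ht
    have ht0 : 0 ≤ t := hM.trans ht
    have h1 := hN' (t + t) (by linarith)
    have h2 := hN' (t + M) (by linarith)
    have h3 := hN' (M + t) (by linarith)
    have h4 := hN' (M + M) (by linarith)
    rw [abs_lt] at h1 h2 h3 h4
    have hqq := q_ge (T t x - T M x) i j
    rw [Matrix.conjTranspose_sub, sub_mul, mul_sub, mul_sub] at hqq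
    simp only [Matrix.trace_sub, Complex.sub_re] at hqq
    rw [hst _ _ ht0 ht0, hst _ _ ht0 hM, hst _ _ hM ht0, hst _ _ hM hM] at hqq
    rw [dist_eq_norm]
    refine lt_of_pow_lt_pow_left₀ 2 hε.le ?_
    refine lt_of_le_of_lt hqq ?_
    linarith
  choose P hP using fun i j => cauchySeq_tendsto_of_complete (hc i j)
  have hPt : Tendsto (fun t => T t x) atTop (𝓝 (P : Matrix (Fin n) (Fin n) ℂ)) :=
    tendsto_pi_nhds.2 fun i => tendsto_pi_nhds.2 fun j => hP i j
  have hfix : ∀ s, 0 ≤ s → T s P = P := by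
    intro s hs
    have c := (LinearMap.continuous_of_finiteDimensional (T s)).tendsto P
    have h1 := c.comp hPt
    have h2 : Tendsto (fun t => T (s + t) x) atTop (𝓝 (P : Matrix (Fin n) (Fin n) ℂ)) :=
      hPt.comp (tendsto_atTop_add_const_left _ s tendsto_id)
    refine tendsto_nhds_unique (h1.congr' ?_) h2
    filter_upwards [eventually_ge_atTop 0] with t ht
    exact (hTsem s t hs ht x).symm
  have hEP := hEfix P hfix
  have hEx : E P = E x := by
    have c := (LinearMap.continuous_of_finiteDimensional E).tendsto P
    refine tendsto_nhds_unique (c.comp hPt) ?_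
    refine tendsto_const_nhds.congr' ?_
    filter_upwards [eventually_ge_atTop 0] with t ht
    exact (hET t ht x).symm
  rw [← hEx, hEP]
  exact hPt

/-- The real-variable part: integrate the differential inequality. -/
theorem ode_first {φ J : ℝ → ℝ} {φ0 lam : ℝ} (hlam : 0 < lam)
    (hd : ∀ t, 0 ≤ t → HasDerivWithinAt φ (-J t) (Set.Ici 0) t)
    (hlim : Tendsto φ atTop (𝓝 φ0))
    (hJ : ∀ t, 0 ≤ t → J t ≤ Real.exp (-lam * t) * J 0) : lam * (φ 0 - φ0) ≤ J 0 := by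
  let G : ℝ → ℝ := fun s => φ s - J 0 / lam * Real.exp (-lam * s)
  have hG : ∀ t, 0 ≤ t → HasDerivWithinAt G (-J t + Real.exp (-lam * t) * J 0) (Set.Ici 0) t := by
    intro t ht
    have e : HasDerivAt (fun s => J 0 / lam * Real.exp (-lam * s))
        (J 0 / lam * (Real.exp (-lam * t) * (-lam * 1))) t :=
      (((hasDerivAt_id t).const_mul (-lam)).exp).const_mul _
    refine ((hd t ht).fun_sub e.hasDerivWithinAt).congr_deriv ?_
    field_simp
    ring
  have hmono : MonotoneOn G (Set.Ici 0) := by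
    refine monotoneOn_of_deriv_nonneg (convex_Ici 0) (fun t ht => (hG t ht).continuousWithinAt)
      ?_ ?_ <;> rw [interior_Ici] <;> intro t ht
    · exact ((hG t (le_of_lt ht)).hasDerivAt (Ici_mem_nhds ht)).differentiableAt.differentiableWithinAt
    · rw [((hG t (le_of_lt ht)).hasDerivAt (Ici_mem_nhds ht)).deriv]
      linarith [hJ t (le_of_lt ht)]
  have hGl : Tendsto G atTop (𝓝 (φ0 - J 0 / lam * 0)) := by
    refine hlim.sub (Tendsto.const_mul _ ?_)
    refine Real.tendsto_exp_atBot.comp ?_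
    exact tendsto_id.const_mul_atTop_of_neg (by linarith)
  have : G 0 ≤ φ0 - J 0 / lam * 0 := by
    refine ge_of_tendsto hGl ?_
    filter_upwards [eventually_ge_atTop 0] with t ht
    exact hmono Set.self_mem_Ici ht ht
  simp only [G, mul_zero, Real.exp_zero, mul_one, sub_zero] at this
  have h2 : φ 0 - φ0 ≤ J 0 / lam := by linarith
  rw [le_div_iff₀ hlam] at h2
  linarith

theorem ode_second {D J : ℝ → ℝ} {lam : ℝ}
    (hd : ∀ t, 0 ≤ t → HasDerivWithinAt D (-J t) (Set.Ici 0) t)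
    (hJ : ∀ t, 0 ≤ t → lam * D t ≤ J t) (t : ℝ) (ht : 0 ≤ t) :
    D t ≤ Real.exp (-lam * t) * D 0 := by
  let G : ℝ → ℝ := fun s => D s * Real.exp (lam * s)
  have hG : ∀ t, 0 ≤ t → HasDerivWithinAt G ((-J t + lam * D t) * Real.exp (lam * t))
      (Set.Ici 0) t := by
    intro t ht
    have e : HasDerivAt (fun s => Real.exp (lam * s))
        (Real.exp (lam * t) * (lam * 1)) t :=
      (((hasDerivAt_id t).const_mul lam).exp)
    refine ((hd t ht).fun_mul e.hasDerivWithinAt).congr_deriv ?_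
    ring
  have hanti : AntitoneOn G (Set.Ici 0) := by
    refine antitoneOn_of_deriv_nonpos (convex_Ici 0) (fun t ht => (hG t ht).continuousWithinAt)
      ?_ ?_ <;> rw [interior_Ici] <;> intro t ht
    · exact ((hG t (le_of_lt ht)).hasDerivAt (Ici_mem_nhds ht)).differentiableAt.differentiableWithinAt
    · rw [((hG t (le_of_lt ht)).hasDerivAt (Ici_mem_nhds ht)).deriv]
      refine mul_nonpos_of_nonpos_of_nonneg ?_ (Real.exp_pos _).le
      linarith [hJ t (le_of_lt ht)]
  have := hanti Set.self_mem_Ici ht ht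
  simp only [G, mul_zero, Real.exp_zero, mul_one] at this
  rw [neg_mul, Real.exp_neg, inv_mul_eq_div, le_div_iff₀ (Real.exp_pos _)]
  exact this

end FisherDecay

/-- if a semigroup `T_t = e^{-tA}` of self-adjoint unital completely positive
maps with fixed-point conditional expectation `E` satisfies the exponential decay of the
`f`-Fisher information `I_A^f(T_t ρ) ≤ e^{-λt} I_A^f(ρ)`, then
`d^f(T_t ρ‖E ρ) ≤ e^{-λt} d^f(ρ‖E ρ)`; in particular `λ d^f(ρ‖E ρ) ≤ I_A^f(ρ)`. -/
theorem fisher_decay_implies_entropy_decay {n : ℕ}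
    (T : ℝ → (Matrix (Fin n) (Fin n) ℂ →ₗ[ℂ] Matrix (Fin n) (Fin n) ℂ))
    (A : Matrix (Fin n) (Fin n) ℂ →ₗ[ℂ] Matrix (Fin n) (Fin n) ℂ)
    (E : Matrix (Fin n) (Fin n) ℂ →ₗ[ℂ] Matrix (Fin n) (Fin n) ℂ)
    (hT0 : T 0 = LinearMap.id)
    (hTsem : ∀ s t : ℝ, 0 ≤ s → 0 ≤ t → ∀ x, T (s + t) x = T s (T t x))
    (hTcp : ∀ t : ℝ, 0 ≤ t → IsCP (T t))
    (hTunital : ∀ t : ℝ, 0 ≤ t → T t 1 = 1)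
    (hTsa : ∀ t : ℝ, 0 ≤ t → ∀ x y, (star (T t x) * y).trace = (star x * T t y).trace)
    (hgen : ∀ (x : Matrix (Fin n) (Fin n) ℂ) (t : ℝ), 0 ≤ t → ∀ i j,
      HasDerivAt (fun s : ℝ => (T s x) i j) (-(A (T t x)) i j) t)
    (hTE : ∀ t : ℝ, 0 ≤ t → ∀ x, T t (E x) = E x)
    (hET : ∀ t : ℝ, 0 ≤ t → ∀ x, E (T t x) = E x)
    (hEfix : ∀ x, (∀ t : ℝ, 0 ≤ t → T t x = x) → E x = x)
    (f f' : ℝ → ℝ)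
    (hf_pos : ∀ x ∈ Set.Ioi (0 : ℝ), 0 < f x)
    (hf_conv : ConvexOn ℝ (Set.Ioi 0) f)
    (hf_deriv : ∀ x ∈ Set.Ioi (0 : ℝ), HasDerivAt f (f' x) x)
    (hf'_cont : ContinuousOn f' (Set.Ioi 0))
    (lam : ℝ) (hlam : 0 < lam)
    (hfisher : ∀ (ρ : Matrix (Fin n) (Fin n) ℂ), ρ.PosDef → ∀ t : ℝ, 0 ≤ t →
      fisherInfo A f' (T t ρ) ≤ Real.exp (-lam * t) * fisherInfo A f' ρ) :
    (∀ (ρ : Matrix (Fin n) (Fin n) ℂ), ρ.PosDef → ∀ t : ℝ, 0 ≤ t →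
      (bregman f f' (T t ρ) (E ρ)).re ≤ Real.exp (-lam * t) * (bregman f f' ρ (E ρ)).re) ∧
    (∀ (ρ : Matrix (Fin n) (Fin n) ℂ), ρ.PosDef →
      lam * (bregman f f' ρ (E ρ)).re ≤ fisherInfo A f' ρ) := by
  have htr : ∀ t : ℝ, 0 ≤ t → ∀ x, (T t x).trace = x.trace := by
    intro t ht x
    have := hTsa t ht 1 x
    rw [hTunital t ht] at this
    simpa using this.symm
  have hlimT := FisherDecay.semigroup_tendsto T E hTsem
    (fun t ht => FisherDecay.cp_contr (hTcp t ht) (hTunital t ht) (htr t ht)) hTsa hET hEfix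
  -- all data for one initial state
  have main : ∀ ρ : Matrix (Fin n) (Fin n) ℂ, ρ.PosDef →
      (∀ t, 0 ≤ t → (T t ρ).PosDef) ∧
      (∀ t, 0 ≤ t → HasDerivWithinAt (fun s => (cfc f (T s ρ)).trace.re)
        (-fisherInfo A f' (T t ρ)) (Set.Ici 0) t) ∧
      Filter.Tendsto (fun s => (cfc f (T s ρ)).trace.re) Filter.atTop
        (nhds (cfc f (E ρ)).trace.re) ∧
      (∀ t, 0 ≤ t → (bregman f f' (T t ρ) (E ρ)).re =
        (cfc f (T t ρ)).trace.re - (cfc f (E ρ)).trace.re) := by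
    intro ρ hρ
    obtain ⟨c, C, hc, hcC⟩ := FisherDecay.posdef_spec hρ
    have hsp := (FisherDecay.spec_iff hρ.1 c C).1 hcC
    have hherm : ∀ t, 0 ≤ t → (T t ρ).IsHermitian := by
      intro t ht
      rw [Matrix.IsHermitian, ← FisherDecay.cp_star (hTcp t ht), hρ.1.eq]
    have hr : ∀ s, 0 ≤ s → (T s ρ).IsHermitian ∧ spectrum ℝ (T s ρ) ⊆ Set.Icc c C := by
      intro s hs
      refine ⟨hherm s hs, (FisherDecay.spec_iff (hherm s hs) c C).2 ⟨?_, ?_⟩⟩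
      · have := FisherDecay.cp_pos (hTcp s hs) hsp.1
        rwa [map_sub, map_smul, hTunital s hs] at this
      · have := FisherDecay.cp_pos (hTcp s hs) hsp.2
        rwa [map_sub, map_smul, hTunital s hs] at this
    have hclosed : IsClosed {x : Matrix (Fin n) (Fin n) ℂ | x.PosSemidef} := by
      have e : {x : Matrix (Fin n) (Fin n) ℂ | x.PosSemidef} =
          {x | xᴴ = x} ∩ ⋂ v : Fin n → ℂ, {x | 0 ≤ star v ⬝ᵥ (x *ᵥ v)} := by
        ext x
        simp [Matrix.posSemidef_iff_dotProduct_mulVec, Matrix.IsHermitian]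
      rw [e]
      refine (isClosed_eq (continuous_id.matrix_conjTranspose) continuous_id).inter
        (isClosed_iInter fun v => isClosed_le continuous_const ?_)
      exact continuous_const.dotProduct (continuous_id.matrix_mulVec continuous_const)
    have hEh : (E ρ).IsHermitian := by
      have h1 := (hlimT ρ).star
      refine tendsto_nhds_unique (h1.congr' ?_) (hlimT ρ)
      filter_upwards [Filter.eventually_ge_atTop 0] with t ht
      exact (hherm t ht).eq
    have hEs : spectrum ℝ (E ρ) ⊆ Set.Icc c C := by
      refine (FisherDecay.spec_iff hEh c C).2 ⟨?_, ?_⟩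
      · refine hclosed.mem_of_tendsto ((hlimT ρ).sub_const _) ?_
        filter_upwards [Filter.eventually_ge_atTop 0] with t ht
        exact ((FisherDecay.spec_iff (hr t ht).1 c C).1 (hr t ht).2).1
      · refine hclosed.mem_of_tendsto ((hlimT ρ).const_sub _) ?_
        filter_upwards [Filter.eventually_ge_atTop 0] with t ht
        exact ((FisherDecay.spec_iff (hr t ht).1 c C).1 (hr t ht).2).2
    have hsub : Set.Icc c C ⊆ Set.Ioi 0 := fun y hy => lt_of_lt_of_le hc hy.1
    refine ⟨fun t ht => FisherDecay.spec_posdef (hr t ht).1 hc (hr t ht).2, ?_, ?_, ?_⟩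
    · intro t ht
      have := FisherDecay.fisher_deriv hf_conv hf_deriv hf'_cont hc (fun s => T s ρ)
        (-(A (T t ρ))) hr ht (fun i j => hgen ρ t ht i j)
      simpa [fisherInfo] using this
    · have hfc : ContinuousOn f (Set.Icc c C) := fun y hy =>
        (hf_deriv y (hsub hy)).continuousAt.continuousWithinAt
      have h1 := FisherDecay.cfc_tendsto (hlimT ρ)
        ((Filter.eventually_ge_atTop 0).mono fun t ht => hr t ht) hEh hEs hfc
      have h2 : Continuous fun x : Matrix (Fin n) (Fin n) ℂ => x.trace.re :=
        Complex.continuous_re.comp (continuous_id.matrix_trace)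
      exact (h2.tendsto _).comp h1
    · intro t ht
      have hfix : ∀ s, 0 ≤ s → T s (cfc f' (E ρ)) = cfc f' (E ρ) := fun s hs =>
        FisherDecay.fix_cfc (hTcp s hs) (hTunital s hs) (htr s hs) hEh (hTE s hs ρ) f'
      have h1 : ∀ s, 0 ≤ s → (T s ρ * cfc f' (E ρ)).trace = (ρ * cfc f' (E ρ)).trace := by
        intro s hs
        have := hTsa s hs ρ (cfc f' (E ρ))
        rw [hfix s hs] at this
        rw [Matrix.star_eq_conjTranspose, Matrix.star_eq_conjTranspose, (hherm s hs).eq,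
          hρ.1.eq] at this
        exact this
      have h2 : (E ρ * cfc f' (E ρ)).trace = (ρ * cfc f' (E ρ)).trace := by
        have hcts : Continuous fun x : Matrix (Fin n) (Fin n) ℂ => (x * cfc f' (E ρ)).trace :=
          (continuous_id.matrix_mul continuous_const).matrix_trace
        refine tendsto_nhds_unique ((hcts.tendsto _).comp (hlimT ρ)) ?_
        refine tendsto_const_nhds.congr' ?_
        filter_upwards [Filter.eventually_ge_atTop 0] with s hs
        exact (h1 s hs).symm
      rw [bregman, Matrix.trace_sub, Matrix.trace_sub, sub_mul, Matrix.trace_sub, h1 t ht, h2,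
        sub_self, sub_zero, Complex.sub_re]
  have hT0' : ∀ x, T 0 x = x := fun x => by rw [hT0]; rfl
  have second : ∀ (ρ : Matrix (Fin n) (Fin n) ℂ), ρ.PosDef →
      lam * (bregman f f' ρ (E ρ)).re ≤ fisherInfo A f' ρ := by
    intro ρ hρ
    obtain ⟨-, m2, m3, m4⟩ := main ρ hρ
    have := FisherDecay.ode_first (J := fun t => fisherInfo A f' (T t ρ)) hlam m2 m3
      (fun t ht => by simpa only [hT0'] using hfisher ρ hρ t ht)
    have m40 := m4 0 le_rfl
    rw [← m40] at this
    simpa only [hT0'] using this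
  refine ⟨fun ρ hρ t ht => ?_, second⟩
  obtain ⟨m1, m2, m3, m4⟩ := main ρ hρ
  have := FisherDecay.ode_second (D := fun s => (cfc f (T s ρ)).trace.re - (cfc f (E ρ)).trace.re)
    (J := fun t => fisherInfo A f' (T t ρ)) (lam := lam)
    (fun t ht => (m2 t ht).sub_const _) (fun s hs => by
      have := second (T s ρ) (m1 s hs)
      rw [hET s hs, m4 s hs] at this
      exact this) t ht
  have m40 := m4 0 le_rfl
  simp only [← m4 t ht] at this
  rw [← m40] at this
  simpa only [hT0'] using this
end

section
/- Let T_t = e^{−tA} be a semigroup of self-adjoint unital trace-preserving completely positive maps on M_n(ℂ), E the conditional expectation onto the fixed point algebra, f : (0,∞) → (0,∞) C¹, and λ > 0. Then the following are equivalent: (1) λ d^f(ρ‖E(ρ)) ≤ I_A^f(ρ) for all positive definite ρ; (2) d^f(T_t(ρ)‖E(ρ)) ≤ e^{−λt} d^f(ρ‖E(ρ)) for all positive definite ρ and all t ≥ 0. -/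
open Matrix
open scoped ComplexOrder

abbrev MM (n : ℕ) := Matrix (Fin n) (Fin n) ℂ

lemma cont_spec {n : ℕ} (X : MM n) (g : ℝ → ℝ) : ContinuousOn g (spectrum ℝ X) :=
  (Matrix.finite_real_spectrum (A := X)).continuousOn g

lemma cfc_form {n : ℕ} {X : MM n} (hX : X.IsHermitian) (φ : ℝ → ℝ) :
    cfc φ X = (hX.eigenvectorUnitary : MM n) *
      diagonal (fun i => ((φ (hX.eigenvalues i) : ℝ) : ℂ)) * star (hX.eigenvectorUnitary : MM n) := by
  rw [hX.cfc_eq, Matrix.IsHermitian.cfc, Unitary.conjStarAlgAut_apply]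
  rfl

lemma trace_two {n : ℕ} {X Y : MM n} (hX : X.IsHermitian) (hY : Y.IsHermitian) :
    ∃ w : Fin n → Fin n → ℝ, (∀ i j, 0 ≤ w i j) ∧ ∀ φ ψ : ℝ → ℝ,
      (cfc φ X * cfc ψ Y).trace.re =
        ∑ i, ∑ j, φ (hX.eigenvalues i) * ψ (hY.eigenvalues j) * w i j := by
  set U : MM n := (hX.eigenvectorUnitary : MM n)
  set V : MM n := (hY.eigenvectorUnitary : MM n)
  refine ⟨fun i j => Complex.normSq ((star U * V) i j), fun i j => Complex.normSq_nonneg _, ?_⟩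
  intro φ ψ
  rw [cfc_form hX, cfc_form hY]
  change (U * _ * star U * (V * _ * star V)).trace.re = _
  set D := diagonal (fun i => ((φ (hX.eigenvalues i) : ℝ) : ℂ))
  set F := diagonal (fun i => ((ψ (hY.eigenvalues i) : ℝ) : ℂ))
  have h1 : (U * D * star U * (V * F * star V)).trace
      = ((D * (star U * V)) * (F * star (star U * V))).trace := by
    rw [star_mul, star_star, show U * D * star U * (V * F * star V) =
      U * (D * star U * V * F * star V) by simp only [Matrix.mul_assoc], Matrix.trace_mul_comm]
    simp only [Matrix.mul_assoc]
  rw [h1]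
  simp only [Matrix.trace, Matrix.diag, Matrix.mul_apply (M := D * (star U * V)), D, F,
    Matrix.diagonal_mul, Complex.re_sum]
  refine Finset.sum_congr rfl fun i _ => Finset.sum_congr rfl fun j _ => ?_
  rw [Matrix.star_apply]
  set z := (star U * V) i j
  rw [show ((φ (hX.eigenvalues i) : ℝ) : ℂ) * z * (((ψ (hY.eigenvalues j) : ℝ) : ℂ) * star z)
    = ((φ (hX.eigenvalues i) : ℝ) : ℂ) * ((ψ (hY.eigenvalues j) : ℝ) : ℂ) * (z * star z) by ring]
  rw [show z * star z = ((Complex.normSq z : ℝ) : ℂ) from Complex.mul_conj z,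
    ← Complex.ofReal_mul, ← Complex.ofReal_mul, Complex.ofReal_re]

lemma remainder_bound {n : ℕ} {X Y : MM n} (hX : X.IsHermitian) (hY : Y.IsHermitian)
    (f f' : ℝ → ℝ) (ε K s : ℝ) (hε : 0 ≤ ε) (hs : 0 < s)
    (hr : ∀ i j, |f (hY.eigenvalues j) - f (hX.eigenvalues i)
        - f' (hX.eigenvalues i) * (hY.eigenvalues j - hX.eigenvalues i)|
      ≤ ε * |hY.eigenvalues j - hX.eigenvalues i|
        + K * (hY.eigenvalues j - hX.eigenvalues i) ^ 2) :
    |(cfc f Y).trace.re - (cfc f X).trace.re - (cfc f' X * (Y - X)).trace.re|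
      ≤ ε * s * n + (ε / s + K) * ((Y - X) * (Y - X)).trace.re := by
  obtain ⟨w, hw, h⟩ := trace_two hX hY
  have hX' : IsSelfAdjoint X := hX
  have hY' : IsSelfAdjoint Y := hY
  have oneX : cfc (fun _ : ℝ => (1 : ℝ)) X = 1 := cfc_const_one ℝ X
  have oneY : cfc (fun _ : ℝ => (1 : ℝ)) Y = 1 := cfc_const_one ℝ Y
  have idX : cfc (fun x : ℝ => x) X = X := cfc_id' ℝ X
  have idY : cfc (fun x : ℝ => x) Y = Y := cfc_id' ℝ Y
  have sqX : cfc (fun x : ℝ => x * x) X = X * X := by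
    rw [cfc_mul _ _ X (cont_spec _ _) (cont_spec _ _), idX]
  have sqY : cfc (fun x : ℝ => x * x) Y = Y * Y := by
    rw [cfc_mul _ _ Y (cont_spec _ _) (cont_spec _ _), idY]
  have hfpX : cfc (fun x : ℝ => f' x * x) X = cfc f' X * X := by
    rw [cfc_mul _ _ X (cont_spec _ _) (cont_spec _ _), idX]
  have e1 := h (fun _ => 1) f
  have e2 := h f (fun _ => 1)
  have e3 := h f' (fun x => x)
  have e4 := h (fun x => f' x * x) (fun _ => 1)
  have e5 := h (fun x => x * x) (fun _ => 1)
  have e6 := h (fun _ => 1) (fun x => x * x)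
  have e7 := h (fun x => x) (fun x => x)
  have e8 := h (fun _ => 1) (fun _ => 1)
  rw [oneX, one_mul] at e1
  rw [oneY, mul_one] at e2
  rw [idY] at e3
  rw [oneY, mul_one, hfpX] at e4
  rw [oneY, mul_one, sqX] at e5
  rw [oneX, one_mul, sqY] at e6
  rw [idX, idY] at e7
  rw [oneX, oneY, mul_one, Matrix.trace_one] at e8
  have hN : (n : ℝ) = ∑ i, ∑ j, w i j := by simpa using e8
  have hQ : ((Y - X) * (Y - X)).trace.re =
      ∑ i, ∑ j, (hY.eigenvalues j - hX.eigenvalues i) ^ 2 * w i j := by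
    have : ((Y - X) * (Y - X)).trace = (X * X).trace + (Y * Y).trace - 2 * (X * Y).trace := by
      rw [sub_mul, mul_sub, mul_sub, trace_sub, trace_sub, trace_sub, trace_mul_comm Y X]; ring
    rw [this]
    simp only [Complex.sub_re, Complex.add_re, Complex.mul_re, Complex.re_ofNat, Complex.im_ofNat,
      zero_mul, sub_zero]
    rw [e5, e6, e7, Finset.mul_sum, ← Finset.sum_add_distrib, ← Finset.sum_sub_distrib]
    refine Finset.sum_congr rfl fun i _ => ?_
    rw [Finset.mul_sum, ← Finset.sum_add_distrib, ← Finset.sum_sub_distrib]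
    refine Finset.sum_congr rfl fun j _ => ?_
    ring
  have hR : (cfc f Y).trace.re - (cfc f X).trace.re - (cfc f' X * (Y - X)).trace.re =
      ∑ i, ∑ j, (f (hY.eigenvalues j) - f (hX.eigenvalues i)
        - f' (hX.eigenvalues i) * (hY.eigenvalues j - hX.eigenvalues i)) * w i j := by
    rw [mul_sub, trace_sub, Complex.sub_re, e1, e2, e3, e4]
    simp only [← Finset.sum_sub_distrib]
    refine Finset.sum_congr rfl fun i _ => Finset.sum_congr rfl fun j _ => ?_
    ring
  rw [hR, hQ, hN, Finset.mul_sum, Finset.mul_sum, ← Finset.sum_add_distrib]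
  refine (Finset.abs_sum_le_sum_abs _ _).trans (Finset.sum_le_sum fun i _ => ?_)
  rw [Finset.mul_sum, Finset.mul_sum, ← Finset.sum_add_distrib]
  refine (Finset.abs_sum_le_sum_abs _ _).trans (Finset.sum_le_sum fun j _ => ?_)
  rw [abs_mul, abs_of_nonneg (hw i j)]
  have hd : |hY.eigenvalues j - hX.eigenvalues i| ≤
      s + (hY.eigenvalues j - hX.eigenvalues i) ^ 2 / s := by
    rw [← sq_abs]
    set d := |hY.eigenvalues j - hX.eigenvalues i|
    have : 0 ≤ d := abs_nonneg _
    rw [show s + d ^ 2 / s = (s ^ 2 + d ^ 2) / s by field_simp, le_div_iff₀ hs]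
    nlinarith [sq_nonneg (d - s)]
  calc _ ≤ (ε * (s + (hY.eigenvalues j - hX.eigenvalues i) ^ 2 / s)
        + K * (hY.eigenvalues j - hX.eigenvalues i) ^ 2) * w i j := by
        refine mul_le_mul_of_nonneg_right ((hr i j).trans ?_) (hw i j)
        gcongr
    _ = _ := by ring

lemma scalar_bound (f : ℝ → ℝ) (d x a b ε : ℝ) (hε : 0 < ε) (hfx : HasDerivAt f d x)
    (hf : ContinuousOn f (Set.Icc a b)) :
    ∃ K : ℝ, 0 ≤ K ∧ ∀ y ∈ Set.Icc a b, |f y - f x - d * (y - x)| ≤ ε * |y - x| + K * (y - x) ^ 2 := by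
  have h1 := (hasDerivAt_iff_isLittleO.1 hfx).def hε
  rw [Metric.eventually_nhds_iff] at h1
  obtain ⟨δ, hδ, h1⟩ := h1
  have hc : ContinuousOn (fun y => f y - f x - d * (y - x)) (Set.Icc a b) := by fun_prop
  obtain ⟨M, hM⟩ := isCompact_Icc.exists_bound_of_continuousOn hc
  refine ⟨|M| / δ ^ 2, by positivity, fun y hy => ?_⟩
  by_cases hyx : |y - x| < δ
  · have := h1 (y := y) (by rwa [Real.dist_eq])
    simp only [smul_eq_mul, Real.norm_eq_abs] at this
    rw [mul_comm d]
    have h0 : 0 ≤ |M| / δ ^ 2 * (y - x) ^ 2 := by positivity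
    linarith
  · push Not at hyx
    have h2 := (hM y hy).trans (le_abs_self M)
    rw [Real.norm_eq_abs] at h2
    have h3 : δ ^ 2 ≤ (y - x) ^ 2 := by
      rw [← sq_abs (y - x)]; gcongr
    have h4 : |M| ≤ |M| / δ ^ 2 * (y - x) ^ 2 := by
      rw [div_mul_eq_mul_div, le_div_iff₀ (by positivity)]
      gcongr
    have : 0 ≤ ε * |y - x| := by positivity
    linarith

lemma psd_sub_iff {n : ℕ} {X : MM n} (hX : X.IsHermitian) (a : ℝ) :
    (X - (a : ℂ) • (1 : MM n)).PosSemidef ↔ ∀ i, a ≤ hX.eigenvalues i := by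
  have hX' : IsSelfAdjoint X := hX
  have : X - (a : ℂ) • (1 : MM n) = (hX.eigenvectorUnitary : MM n) *
      diagonal (fun i => ((hX.eigenvalues i - a : ℝ) : ℂ)) *
        star (hX.eigenvectorUnitary : MM n) := by
    rw [← cfc_form hX (fun x => x - a), cfc_sub _ _ X (cont_spec _ _) (cont_spec _ _),
      cfc_id' ℝ X, cfc_const a X]
    congr 1
    ext i j
    simp [Matrix.algebraMap_matrix_apply, Matrix.one_apply]
  rw [this, Unitary.isUnit_coe.posSemidef_star_right_conjugate_iff, posSemidef_diagonal_iff]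
  simp only [Complex.zero_le_real, sub_nonneg]

lemma psd_sub_iff' {n : ℕ} {X : MM n} (hX : X.IsHermitian) (b : ℝ) :
    ((b : ℂ) • (1 : MM n) - X).PosSemidef ↔ ∀ i, hX.eigenvalues i ≤ b := by
  have hX' : IsSelfAdjoint X := hX
  have : (b : ℂ) • (1 : MM n) - X = (hX.eigenvectorUnitary : MM n) *
      diagonal (fun i => ((b - hX.eigenvalues i : ℝ) : ℂ)) *
        star (hX.eigenvectorUnitary : MM n) := by
    rw [← cfc_form hX (fun x => b - x), cfc_sub _ _ X (cont_spec _ _) (cont_spec _ _),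
      cfc_id' ℝ X, cfc_const b X]
    congr 1
    ext i j
    simp [Matrix.algebraMap_matrix_apply, Matrix.one_apply]
  rw [this, Unitary.isUnit_coe.posSemidef_star_right_conjugate_iff, posSemidef_diagonal_iff]
  simp only [Complex.zero_le_real, sub_nonneg]

lemma cp_pos {n : ℕ} {β : MM n →ₗ[ℂ] MM n} (h : IsCP β) {x : MM n} (hx : x.PosSemidef) :
    (β x).PosSemidef := by
  have h1 := h 1 (x.submatrix Prod.snd Prod.snd) (hx.submatrix _)
  have h2 := h1.submatrix (fun a : Fin n => ((0 : Fin 1), a))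
  exact h2

lemma cp_sq {n : ℕ} {β : MM n →ₗ[ℂ] MM n} (h : IsCP β) (h1 : β 1 = 1)
    (htr : ∀ x, (β x).trace = x.trace) {x : MM n} (hx : x.IsHermitian) (hfix : β x = x) :
    β (x * x) = x * x := by
  let V : Matrix (Fin 2 × Fin n) (Fin n) ℂ := Matrix.of fun p q => (![1, x] p.1 : MM n) p.2 q
  let W : Matrix (Fin 2 × Fin n) (Fin n) ℂ := Matrix.of fun p q => (![-x, 1] p.1 : MM n) p.2 q
  have h2 := (h 2 _ (posSemidef_self_mul_conjTranspose V)).conjTranspose_mul_mul_same W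
  have key : amplify β 2 (V * Vᴴ) =
    Matrix.of fun p q => (![![1, x], ![x, β (x * x)]] p.1 q.1 : MM n) p.2 q.2 := by
    ext ⟨p, a⟩ ⟨q, b⟩
    have hb : (Matrix.of fun a b => (V * Vᴴ) (p, a) (q, b)) = (![1, x] p : MM n) * (![1, x] q : MM n)ᴴ := by
      ext a b
      simp [V, Matrix.mul_apply]
    simp only [amplify, Matrix.of_apply]
    rw [hb]
    fin_cases p <;> fin_cases q <;> simp [h1, hfix, hx.eq]
  have e : Wᴴ * amplify β 2 (V * Vᴴ) * W = β (x * x) - x * x := by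
    have : ∀ M : Fin 2 → Fin 2 → MM n,
      Wᴴ * (Matrix.of fun p q => M p.1 q.1 p.2 q.2 : Matrix (Fin 2 × Fin n) (Fin 2 × Fin n) ℂ) * W
        = ∑ p, ∑ q, (![-x, 1] p : MM n)ᴴ * M p q * (![-x, 1] q : MM n) := by
      intro M
      ext a b
      simp only [Matrix.sum_apply]
      simp only [Matrix.mul_apply, Fintype.sum_prod_type, W, Finset.sum_mul,
        Matrix.conjTranspose_apply, Matrix.of_apply]
      simp only [Fin.sum_univ_two, Finset.sum_add_distrib]
      ring
    rw [key, this]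
    simp only [Fin.sum_univ_two, Matrix.cons_val_zero, Matrix.cons_val_one, conjTranspose_neg,
      conjTranspose_one, hx.eq]
    noncomm_ring
  rw [e] at h2
  have h3 := h2.trace_eq_zero_iff.1 (by rw [trace_sub, htr, sub_self])
  exact sub_eq_zero.1 h3

lemma cp_pow {n : ℕ} {β : MM n →ₗ[ℂ] MM n} (h : IsCP β) (h1 : β 1 = 1)
    (htr : ∀ x, (β x).trace = x.trace) {x : MM n} (hx : x.IsHermitian) (hfix : β x = x) (k : ℕ) :
    β (x ^ k) = x ^ k := by
  induction k with
  | zero => simpa using h1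
  | succ k ih =>
    have hk : (x ^ k).IsHermitian := hx.pow k
    have a1 := cp_sq h h1 htr (hk.add hx) (by rw [map_add, ih, hfix])
    have a2 := cp_sq h h1 htr hk ih
    have a3 := cp_sq h h1 htr hx hfix
    have e : (x ^ k + x) * (x ^ k + x) = x ^ k * x ^ k + x * x + (2 : ℂ) • x ^ (k + 1) := by
      rw [two_smul, add_mul, mul_add, mul_add, ← pow_succ, ← pow_succ']; abel
    rw [e, map_add, map_add, a2, a3, map_smul] at a1
    exact smul_right_injective _ (two_ne_zero' ℂ) (add_left_cancel a1)

lemma cp_cfc {n : ℕ} {β : MM n →ₗ[ℂ] MM n} (h : IsCP β) (h1 : β 1 = 1)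
    (htr : ∀ x, (β x).trace = x.trace) {x : MM n} (hfix : β x = x) (g : ℝ → ℝ) :
    β (cfc g x) = cfc g x := by
  by_cases hx : IsSelfAdjoint x
  swap
  · rw [cfc_apply_of_not_predicate x hx, map_zero]
  have hfin := Matrix.finite_real_spectrum (A := x)
  let p : Polynomial ℝ := Lagrange.interpolate hfin.toFinset id g
  have hp : cfc g x = cfc p.eval x := by
    refine cfc_congr fun y hy => ?_
    have := Lagrange.eval_interpolate_at_node (s := hfin.toFinset) (v := id) g
      (Function.injective_id.injOn) (hfin.mem_toFinset.2 hy)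
    exact this.symm
  rw [hp, cfc_polynomial p x hx, Polynomial.aeval_eq_sum_range, map_sum]
  refine Finset.sum_congr rfl fun k _ => ?_
  have : ∀ (r : ℝ) (y : MM n), r • y = (r : ℂ) • y := fun r y => by
    ext i j; simp
  rw [this, map_smul, cp_pow h h1 htr hx hfix]

lemma posDef_bounds {n : ℕ} {X : MM n} (hX : X.PosDef) :
    ∃ a b : ℝ, 0 < a ∧ (X - (a : ℂ) • (1 : MM n)).PosSemidef ∧
      ((b : ℂ) • (1 : MM n) - X).PosSemidef := by
  obtain ⟨b, hb⟩ := (Set.finite_range hX.1.eigenvalues).bddAbove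
  have ha : ∃ a : ℝ, 0 < a ∧ ∀ i, a ≤ hX.1.eigenvalues i := by
    rcases isEmpty_or_nonempty (Fin n) with h | h
    · exact ⟨1, one_pos, fun i => h.elim i⟩
    · obtain ⟨i, hi⟩ := Finite.exists_min hX.1.eigenvalues
      exact ⟨_, hX.eigenvalues_pos i, hi⟩
  obtain ⟨a, ha, h⟩ := ha
  exact ⟨a, b, ha, (psd_sub_iff hX.1 a).2 h, (psd_sub_iff' hX.1 b).2 fun i => hb ⟨i, rfl⟩⟩

lemma deriv_trace {n : ℕ} (Z : ℝ → MM n) (D : MM n) (t a b : ℝ) (ht : 0 ≤ t) (ha : 0 < a)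
    (hev : ∀ s, 0 ≤ s → ∃ h : (Z s).IsHermitian, ∀ i, h.eigenvalues i ∈ Set.Icc a b)
    (hZ : ∀ i j, HasDerivAt (fun s => Z s i j) (D i j) t)
    (f f' : ℝ → ℝ) (hf : ∀ x ∈ Set.Ioi (0 : ℝ), HasDerivAt f (f' x) x) :
    HasDerivWithinAt (fun s => (cfc f (Z s)).trace.re) ((D * cfc f' (Z t)).trace.re)
      (Set.Ici 0) t := by
  obtain ⟨hX, hXe⟩ := hev t ht
  have hfc : ContinuousOn f (Set.Icc a b) := fun x hx =>
    (hf x (lt_of_lt_of_le ha hx.1)).continuousAt.continuousWithinAt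
  -- linear part
  have hL : HasDerivAt (fun s => (cfc f' (Z t) * (Z s - Z t)).trace.re)
      ((D * cfc f' (Z t)).trace.re) t := by
    rw [trace_mul_comm]
    have : HasDerivAt (fun s => (cfc f' (Z t) * (Z s - Z t)).trace) ((cfc f' (Z t) * D).trace) t := by
      simp only [Matrix.trace, Matrix.diag, Matrix.mul_apply, Matrix.sub_apply]
      refine HasDerivAt.fun_sum fun i _ => HasDerivAt.fun_sum fun j _ => ?_
      exact ((hZ j i).sub_const _).const_mul _
    exact (Complex.reCLM.hasFDerivAt.comp_hasDerivAt t this)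
  -- quadratic part
  have hQ : ∃ C : ℝ, 0 ≤ C ∧ ∀ᶠ s in nhdsWithin t (Set.Ici 0),
      ((Z s - Z t) * (Z s - Z t)).trace.re ≤ C * (s - t) ^ 2 := by
    have h1 : (fun s => ((Z s - Z t) * (Z s - Z t)).trace) =O[nhds t] fun s => (s - t) * (s - t) := by
      simp only [Matrix.trace, Matrix.diag, Matrix.mul_apply, Matrix.sub_apply]
      refine Asymptotics.IsBigO.fun_sum fun i _ => Asymptotics.IsBigO.fun_sum fun j _ => ?_
      exact (hZ i j).isBigO_sub.mul (hZ j i).isBigO_sub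
    obtain ⟨C, hC, h2⟩ := h1.exists_pos
    refine ⟨C, hC.le, ?_⟩
    filter_upwards [nhdsWithin_le_nhds h2.bound] with s hs
    refine (Complex.re_le_norm _).trans (hs.trans_eq ?_)
    rw [Real.norm_eq_abs, abs_mul_self]; ring
  obtain ⟨C, hC, hQ⟩ := hQ
  rw [hasDerivWithinAt_iff_isLittleO]
  have hL' := (hasDerivWithinAt_iff_isLittleO.1 (hL.hasDerivWithinAt (s := Set.Ici 0)))
  have hrem : (fun s => (cfc f (Z s)).trace.re - (cfc f (Z t)).trace.re
      - (cfc f' (Z t) * (Z s - Z t)).trace.re) =o[nhdsWithin t (Set.Ici 0)] fun s => s - t := by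
    rw [Asymptotics.isLittleO_iff]
    intro c hc
    set ε : ℝ := c / (n + C + C + 1) with hεdef
    have hden : 0 < (n : ℝ) + C + C + 1 := by positivity
    have hε : 0 < ε := by positivity
    choose K hK0 hK using fun i => scalar_bound f (f' (hX.eigenvalues i)) (hX.eigenvalues i) a b ε hε
      (hf _ (lt_of_lt_of_le ha (hXe i).1)) hfc
    have hsm : ∀ᶠ s in nhdsWithin t (Set.Ici 0), (∑ i, K i) * |s - t| < ε := by
      have : Filter.Tendsto (fun s => (∑ i, K i) * |s - t|) (nhds t) (nhds ((∑ i, K i) * |t - t|)) :=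
        Continuous.tendsto (by fun_prop) t
      rw [sub_self, abs_zero, mul_zero] at this
      exact nhdsWithin_le_nhds (this.eventually (gt_mem_nhds hε))
    filter_upwards [hQ, hsm, self_mem_nhdsWithin] with s hq hs hs0
    rcases eq_or_ne s t with rfl | hst
    · simp
    have hd : 0 < |s - t| := abs_pos.2 (sub_ne_zero.2 hst)
    obtain ⟨hY, hYe⟩ := hev s hs0
    have := remainder_bound hX hY f f' ε (∑ i, K i) |s - t| hε.le hd (fun i j => by
      refine (hK i _ (hYe j)).trans ?_
      gcongr
      exact Finset.single_le_sum (f := K) (fun i _ => hK0 i) (Finset.mem_univ i))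
    have hKs : 0 ≤ ∑ i, K i := Finset.sum_nonneg fun i _ => hK0 i
    rw [Real.norm_eq_abs, Real.norm_eq_abs]
    calc _ ≤ _ := this
      _ ≤ ε * |s - t| * n + (ε / |s - t| + ∑ i, K i) * (C * (s - t) ^ 2) := by gcongr
      _ = |s - t| * (ε * n + ε * C + (∑ i, K i) * |s - t| * C) := by
        rw [← sq_abs (s - t)]; field_simp; ring
      _ ≤ |s - t| * (ε * n + ε * C + ε * C) := by gcongr
      _ ≤ |s - t| * c := by
        have : c = ε * (n + C + C + 1) := by rw [hεdef]; field_simp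
        gcongr
        rw [this]; nlinarith
      _ = c * |s - t| := mul_comm _ _
  refine (hrem.add hL').congr_left fun s => ?_
  simp only [sub_self, mul_zero, trace_zero, Complex.zero_re, smul_eq_mul]
  ring

/-- for a semigroup `T_t = e^{-tA}` of self-adjoint unital trace-preserving
completely positive maps with fixed-point conditional expectation `E`, C¹
`f : (0,∞) → (0,∞)` and `λ > 0`, the modified `f`-Sobolev inequality
`λ d^f(ρ‖E ρ) ≤ I_A^f(ρ)` is equivalent to the exponential entropy decay
`d^f(T_t ρ‖E ρ) ≤ e^{-λt} d^f(ρ‖E ρ)`. -/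
theorem mfsi_iff_entropy_decay {n : ℕ}
    (T : ℝ → (Matrix (Fin n) (Fin n) ℂ →ₗ[ℂ] Matrix (Fin n) (Fin n) ℂ))
    (A : Matrix (Fin n) (Fin n) ℂ →ₗ[ℂ] Matrix (Fin n) (Fin n) ℂ)
    (E : Matrix (Fin n) (Fin n) ℂ →ₗ[ℂ] Matrix (Fin n) (Fin n) ℂ)
    (hT0 : T 0 = LinearMap.id)
    (hTsem : ∀ s t : ℝ, 0 ≤ s → 0 ≤ t → ∀ x, T (s + t) x = T s (T t x))
    (hTcp : ∀ t : ℝ, 0 ≤ t → IsCP (T t))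
    (hTunital : ∀ t : ℝ, 0 ≤ t → T t 1 = 1)
    (hTtr : ∀ t : ℝ, 0 ≤ t → ∀ x, (T t x).trace = x.trace)
    (hTsa : ∀ t : ℝ, 0 ≤ t → ∀ x y, (star (T t x) * y).trace = (star x * T t y).trace)
    (hgen : ∀ (x : Matrix (Fin n) (Fin n) ℂ) (t : ℝ), 0 ≤ t → ∀ i j,
      HasDerivAt (fun s : ℝ => (T s x) i j) (-(A (T t x)) i j) t)
    (hTE : ∀ t : ℝ, 0 ≤ t → ∀ x, T t (E x) = E x)
    (hET : ∀ t : ℝ, 0 ≤ t → ∀ x, E (T t x) = E x)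
    (hEfix : ∀ x, (∀ t : ℝ, 0 ≤ t → T t x = x) → E x = x)
    (f f' : ℝ → ℝ)
    (hf_pos : ∀ x ∈ Set.Ioi (0 : ℝ), 0 < f x)
    (hf_deriv : ∀ x ∈ Set.Ioi (0 : ℝ), HasDerivAt f (f' x) x)
    (hf'_cont : ContinuousOn f' (Set.Ioi 0))
    (lam : ℝ) (hlam : 0 < lam) :
    (∀ (ρ : Matrix (Fin n) (Fin n) ℂ), ρ.PosDef →
        lam * (bregman f f' ρ (E ρ)).re ≤ fisherInfo A f' ρ) ↔
    (∀ (ρ : Matrix (Fin n) (Fin n) ℂ), ρ.PosDef → ∀ t : ℝ, 0 ≤ t →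
        (bregman f f' (T t ρ) (E ρ)).re ≤ Real.exp (-lam * t) * (bregman f f' ρ (E ρ)).re) := by
  classical
  -- trace part is constant in time
  have hherm : ∀ (ρ : MM n), ρ.PosDef → ∀ t : ℝ, 0 ≤ t → (T t ρ).IsHermitian := fun ρ hρ t ht =>
    (cp_pos (hTcp t ht) hρ.posSemidef).1
  have hbreg : ∀ (ρ : MM n), ρ.PosDef → ∀ t : ℝ, 0 ≤ t →
      (bregman f f' (T t ρ) (E ρ)).re = (cfc f (T t ρ)).trace.re
        - ((cfc f (E ρ)).trace.re + ((ρ - E ρ) * cfc f' (E ρ)).trace.re) := by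
    intro ρ hρ t ht
    have hc := cp_cfc (hTcp t ht) (hTunital t ht) (hTtr t ht) (hTE t ht ρ) f'
    have h1 := hTsa t ht ρ (cfc f' (E ρ))
    rw [hc, show star (T t ρ) = T t ρ from (hherm ρ hρ t ht), show star ρ = ρ from hρ.1] at h1
    rw [bregman, trace_sub, trace_sub, sub_mul, trace_sub, h1, sub_mul, trace_sub]
    simp only [Complex.sub_re]
    ring
  have hT0' : ∀ x, T 0 x = x := fun x => by rw [hT0]; rfl
  have hderiv : ∀ (ρ : MM n), ρ.PosDef → ∀ t : ℝ, 0 ≤ t →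
      HasDerivWithinAt (fun s => (bregman f f' (T s ρ) (E ρ)).re)
        (-(fisherInfo A f' (T t ρ))) (Set.Ici 0) t := by
    intro ρ hρ t ht
    obtain ⟨a, b, ha, h1, h2⟩ := posDef_bounds hρ
    have hev : ∀ s, 0 ≤ s → ∃ h : (T s ρ).IsHermitian, ∀ i, h.eigenvalues i ∈ Set.Icc a b := by
      intro s hs
      have g1 := cp_pos (hTcp s hs) h1
      have g2 := cp_pos (hTcp s hs) h2
      rw [map_sub, map_smul, hTunital s hs] at g1 g2
      exact ⟨hherm ρ hρ s hs, fun i => ⟨(psd_sub_iff _ a).1 g1 i, (psd_sub_iff' _ b).1 g2 i⟩⟩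
    have := deriv_trace (fun s => T s ρ) (-(A (T t ρ))) t a b ht ha hev
      (fun i j => hgen ρ t ht i j) f f' hf_deriv
    have h3 := this.sub_const ((cfc f (E ρ)).trace.re + ((ρ - E ρ) * cfc f' (E ρ)).trace.re)
    refine HasDerivWithinAt.congr_deriv (h3.congr (fun s hs => hbreg ρ hρ s hs) (hbreg ρ hρ t ht)) ?_
    rw [neg_mul, trace_neg, Complex.neg_re, fisherInfo]
  have hpd : ∀ (ρ : MM n), ρ.PosDef → ∀ t : ℝ, 0 ≤ t → (T t ρ).PosDef := by
    intro ρ hρ t ht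
    obtain ⟨a, b, ha, h1, h2⟩ := posDef_bounds hρ
    have g1 := cp_pos (hTcp t ht) h1
    rw [map_sub, map_smul, hTunital t ht] at g1
    exact (hherm ρ hρ t ht).posDef_iff_eigenvalues_pos.2 fun i =>
      ha.trans_le ((psd_sub_iff _ a).1 g1 i)
  have hexp : ∀ (ρ : MM n), ρ.PosDef → ∀ t : ℝ, 0 ≤ t →
      HasDerivWithinAt (fun s => Real.exp (lam * s) * (bregman f f' (T s ρ) (E ρ)).re)
        (Real.exp (lam * t) * (lam * (bregman f f' (T t ρ) (E ρ)).re - fisherInfo A f' (T t ρ)))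
        (Set.Ici 0) t := by
    intro ρ hρ t ht
    have h1 : HasDerivAt (fun s => Real.exp (lam * s)) (Real.exp (lam * t) * (lam * 1)) t :=
      ((hasDerivAt_id t).const_mul lam).exp
    refine (h1.hasDerivWithinAt.mul (hderiv ρ hρ t ht)).congr_deriv ?_
    ring
  constructor
  · intro H ρ hρ t ht
    have hanti : AntitoneOn (fun s => Real.exp (lam * s) * (bregman f f' (T s ρ) (E ρ)).re)
        (Set.Ici 0) := by
      refine antitoneOn_of_hasDerivWithinAt_nonpos (convex_Ici 0)
        (fun s hs => (hexp ρ hρ s hs).continuousWithinAt)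
        (fun s hs => (hexp ρ hρ s (interior_subset hs)).mono interior_subset) ?_
      intro s hs
      have hs0 : 0 ≤ s := interior_subset hs
      have := H (T s ρ) (hpd ρ hρ s hs0)
      rw [hET s hs0] at this
      exact mul_nonpos_of_nonneg_of_nonpos (Real.exp_pos _).le (by linarith)
    have := hanti (Set.mem_Ici.2 le_rfl) (Set.mem_Ici.2 ht) ht
    simp only [mul_zero, Real.exp_zero, one_mul, hT0'] at this
    rw [neg_mul, Real.exp_neg, ← div_eq_inv_mul, le_div_iff₀ (Real.exp_pos _)]
    linarith
  · intro H ρ hρ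
    have h0 := hexp ρ hρ 0 le_rfl
    simp only [mul_zero, Real.exp_zero, one_mul, hT0'] at h0
    have hmax : ∀ s ∈ Set.Ici (0 : ℝ), Real.exp (lam * s) * (bregman f f' (T s ρ) (E ρ)).re ≤
        Real.exp (lam * 0) * (bregman f f' (T 0 ρ) (E ρ)).re := by
      intro s hs
      have := H ρ hρ s hs
      rw [neg_mul, Real.exp_neg, ← div_eq_inv_mul, le_div_iff₀ (Real.exp_pos _)] at this
      simp only [mul_zero, Real.exp_zero, one_mul, hT0']
      linarith
    have hle : lam * (bregman f f' ρ (E ρ)).re - fisherInfo A f' ρ ≤ 0 := by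
      have hs := (hasDerivWithinAt_iff_tendsto_slope' (by simp)).1 (h0.mono Set.Ioi_subset_Ici_self)
      refine le_of_tendsto hs ?_
      filter_upwards [self_mem_nhdsWithin] with s hs
      rw [slope_def_field]
      exact div_nonpos_of_nonpos_of_nonneg (sub_nonpos.2 (hmax s (Set.Ioi_subset_Ici_self hs)))
        (sub_nonneg.2 (le_of_lt hs))
    linarith
end
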